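/- arXiv:2106.06864 — 7 statements merged into one kernel-verified Lean document; each statement's English description precedes it below -/
import Mathlib

section
/- Let n ≥ 3 and let v = (v_1,…,v_n) be a vector of nonnegative integers with v_1 ≥ 1, v_n ≥ 1 and v_1 + v_2 + ⋯ + v_n odd. Then N_n(v) = N_n(v − e_1 − e_2) + N_n(v − e_n) + Σ_{u ∈ ℕ^{n−2}, Σu odd} N_{n−2}(u) · N_n(v − ū − e_1) + Σ_{u ∈ ℕ^{n−2}, u ≠ 0, Σu even} N_{n−2}(u) · N_n(v − ū − e_n), where e_k is the k-th standard basis vector of ℤ^n, ū = (0, u_1, …, u_{n−2}, 0) ∈ ℤ^n, and each sum has only finitely many nonzero terms (terms with a negative entry in the argument vanish by convention). -/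
/-!
Cut a word at its first letter that is `1` or `n`; since `v` has a nonzero extreme entry, there is
one. The prefix `a` before it is down-up alternating over `{2, …, n - 1}`, and alternation forces
the cut letter to be `1` when `a` has odd length and `n` when it has even length. Apart from
`a = [2]`, lowering all letters by one identifies the prefixes with the words counted by
`N_{n-2}`.

After a cut at `1`, the rest is again such a word. After a cut at `n`, the rest has even length,
because the total length is odd, so read backwards it is such a word too. Conversely an extreme
letter imposes no condition on the prefix, and the words cut after a given prefix are counted by
`N_n` of the remaining multiplicities. Grouping the prefixes by their multiplicities `u` gives the
recurrence: the prefix `[2]` contributes the first term, the empty prefix the second.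
-/

/-- A word (list over `ℕ`) is down-up alternating if `w 1 > w 2 < w 3 > w 4 < ⋯`
(1-indexed). -/
def DownUpAlt (w : List ℕ) : Prop :=
  ∀ k : ℕ, k + 1 < w.length →
    if k % 2 = 0 then w.getD (k + 1) 0 < w.getD k 0 else w.getD k 0 < w.getD (k + 1) 0

/-- `NVec n v` is the number of down-up alternating words over `{1,…,n}` that are
empty or have first letter `≥ 2`, and in which letter `i` occurs exactly `v i`
times (it is `0` if some entry of `v` is negative). -/
noncomputable def NVec (n : ℕ) (v : Fin n → ℤ) : ℕ :=
  Nat.card {w : List ℕ // (∀ x ∈ w, 1 ≤ x ∧ x ≤ n) ∧ DownUpAlt w ∧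
    (w = [] ∨ 2 ≤ w.headI) ∧ ∀ i : Fin n, (w.count ((i : ℕ) + 1) : ℤ) = v i}

/-! ### Finitely supported sums -/

theorem finsum_mem_fiberwise {α β M : Type*} [AddCommMonoid M] {s : Set α} {f : α → M}
    (h : (s ∩ Function.support f).Finite) (π : α → β) :
    ∑ᶠ a ∈ s, f a = ∑ᶠ b, ∑ᶠ a ∈ s ∩ π ⁻¹' {b}, f a := by
  classical
  have hfiber (b : β) : ∑ᶠ a ∈ s ∩ π ⁻¹' {b}, f a = ∑ a ∈ h.toFinset with π a = b, f a :=
    finsum_mem_eq_sum_of_inter_support_eq _ (by ext; simp; tauto)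
  rw [finsum_congr hfiber, finsum_eq_sum_of_support_subset _
    (h.toFinset.support_of_fiberwise_sum_subset_image f π),
    Finset.sum_fiberwise_of_maps_to fun a ha => Finset.mem_image_of_mem π ha]
  exact finsum_mem_eq_sum_of_inter_support_eq _ (by ext; simp)

theorem finsum_eq_zero_add_odd_add_even {ι M : Type*} [Fintype ι] [AddCommMonoid M]
    {f : (ι → ℕ) → M} (hf : (Function.support f).Finite) :
    ∑ᶠ u, f u = f 0 + ∑ᶠ u ∈ {u | Odd (∑ i, u i)}, f u +
      ∑ᶠ u ∈ {u | u ≠ 0 ∧ Even (∑ i, u i)}, f u := by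
  have hinter (s : Set (ι → ℕ)) : (s ∩ Function.support f).Finite := hf.inter_of_right s
  have huniv : (Set.univ : Set (ι → ℕ)) =
      insert 0 ({u | Odd (∑ i, u i)} ∪ {u | u ≠ 0 ∧ Even (∑ i, u i)}) := by
    ext u
    have := Nat.even_or_odd (∑ i, u i)
    simp only [Set.mem_univ, Set.mem_insert_iff, Set.mem_union, Set.mem_ofPred_eq]
    tauto
  have hzero : (0 : ι → ℕ) ∉ {u | Odd (∑ i, u i)} ∪ {u | u ≠ 0 ∧ Even (∑ i, u i)} := by simp
  have hdisjoint : Disjoint {u : ι → ℕ | Odd (∑ i, u i)} {u | u ≠ 0 ∧ Even (∑ i, u i)} :=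
    Set.disjoint_left.2 fun u hodd heven => Nat.not_even_iff_odd.2 hodd heven.2
  rw [← finsum_mem_univ, huniv, finsum_mem_insert' f hzero (hinter _),
    finsum_mem_union' hdisjoint (hinter _) (hinter _), add_assoc]

/-! ### Alternating words -/

/-- The order required between a letter `x` at (0-indexed) position `k` of an alternating word and
a letter `y` adjacent to it: letters at even positions are peaks, those at odd positions valleys. -/
def StepAt (k x y : ℕ) : Prop :=
  if k % 2 = 0 then y < x else x < y

theorem stepAt_congr {k k' x y : ℕ} (h : k % 2 = k' % 2) : StepAt k x y ↔ StepAt k' x y := by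
  simp only [StepAt, h]

theorem stepAt_succ {k x y : ℕ} : StepAt (k + 1) x y ↔ StepAt k y x := by
  unfold StepAt
  split_ifs <;> omega

/-- The alternation condition on a word whose first letter sits at position `k` of a larger word,
so that `AltFrom 0` is the down-up and `AltFrom 1` the up-down condition. -/
def AltFrom : ℕ → List ℕ → Prop
  | _, [] => True
  | k, x :: l => (∀ y ∈ l.head?, StepAt k x y) ∧ AltFrom (k + 1) l

theorem altFrom_congr {k k' : ℕ} {w : List ℕ} (h : k % 2 = k' % 2) :
    AltFrom k w ↔ AltFrom k' w := by
  induction w generalizing k k' with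
  | nil => rfl
  | cons x l ih =>
    simp only [AltFrom, stepAt_congr h, ih (show (k + 1) % 2 = (k' + 1) % 2 by omega)]

theorem altFrom_singleton (k x : ℕ) : AltFrom k [x] := by
  simp [AltFrom]

theorem altFrom_cons_cons {k x y : ℕ} {l : List ℕ} :
    AltFrom k (x :: y :: l) ↔ StepAt k x y ∧ AltFrom (k + 1) (y :: l) := by
  simp [AltFrom]

theorem altFrom_iff_getD {k : ℕ} {w : List ℕ} :
    AltFrom k w ↔
      ∀ j, j + 1 < w.length → StepAt (k + j) (w.getD j 0) (w.getD (j + 1) 0) := by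
  induction w generalizing k with
  | nil => simp [AltFrom]
  | cons x l ih =>
    cases l with
    | nil => simp [AltFrom]
    | cons y l =>
      have hshift (j : ℕ) : k + 1 + j = k + (j + 1) := by omega
      refine Iff.trans ?_ Nat.and_forall_add_one
      rw [altFrom_cons_cons, ih]
      simp [hshift]

theorem downUpAlt_iff_altFrom {w : List ℕ} : DownUpAlt w ↔ AltFrom 0 w := by
  simp only [altFrom_iff_getD, DownUpAlt, StepAt, zero_add]

theorem altFrom_append {k : ℕ} {a b : List ℕ} :
    AltFrom k (a ++ b) ↔ AltFrom k a ∧ AltFrom (k + a.length) b ∧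
      ∀ x ∈ a.getLast?, ∀ y ∈ b.head?, StepAt (k + a.length) y x := by
  induction a generalizing k with
  | nil => simp [AltFrom]
  | cons x a ih =>
    have hlen : k + (x :: a).length = k + 1 + a.length := by rw [List.length_cons]; omega
    rw [hlen]
    cases a with
    | nil => simp [AltFrom, stepAt_succ, and_comm]
    | cons y a => simpa [altFrom_cons_cons, and_assoc] using fun _ => ih

theorem altFrom_append_cons_of_forall_stepAt {k x : ℕ} {a b : List ℕ}
    (h : ∀ y ∈ a, StepAt (k + a.length) x y) :
    AltFrom k (a ++ x :: b) ↔ AltFrom k a ∧ AltFrom (k + a.length) (x :: b) := by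
  rw [altFrom_append, and_congr_right_iff]
  refine fun _ => and_iff_left fun y hy z hz => ?_
  obtain rfl : x = z := by simpa using hz
  exact h y (List.mem_of_mem_getLast? hy)

theorem altFrom_cons_of_forall_not_stepAt {k x : ℕ} {w : List ℕ}
    (hw : ∀ y ∈ w, ¬ StepAt k y x) (hne : w ≠ [x]) :
    AltFrom k (x :: w) ↔ AltFrom (k + 1) w := by
  -- The first letter of `w` cannot equal `x`: the second one would have to go beyond it.
  refine and_iff_right_of_imp fun h y hy => ?_
  have hxy := hw y (List.mem_of_mem_head? hy)
  rcases w with _ | ⟨s, _ | ⟨t, l⟩⟩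
  · simp at hy
  · obtain rfl : s = y := by simpa using hy
    have hsx : s ≠ x := by simpa using hne
    unfold StepAt at hxy ⊢
    split_ifs at hxy ⊢ <;> omega
  · obtain rfl : s = y := by simpa using hy
    have hst := stepAt_succ.1 (altFrom_cons_cons.1 h).1
    have hxt := hw t (by simp)
    unfold StepAt at hst hxt ⊢
    split_ifs at hst hxt ⊢ <;> omega

theorem altFrom_one_cons_iff {w : List ℕ} (hw : ∀ x ∈ w, 1 ≤ x) (hne : w ≠ [1]) :
    AltFrom 1 (1 :: w) ↔ AltFrom 0 w := by
  have hmin : ∀ x ∈ w, ¬ StepAt 1 x 1 := fun x hx => by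
    simpa [StepAt, Nat.one_le_iff_ne_zero] using hw x hx
  exact (altFrom_cons_of_forall_not_stepAt hmin hne).trans (altFrom_congr (k := 2) rfl)

theorem altFrom_reverse {k : ℕ} {w : List ℕ} :
    AltFrom k w.reverse ↔ AltFrom (k + w.length + 1) w := by
  induction w generalizing k with
  | nil => rfl
  | cons x l ih =>
    have hstep (y : ℕ) : StepAt (k + l.length) x y ↔ StepAt (k + (x :: l).length + 1) x y :=
      stepAt_congr (by rw [List.length_cons]; omega)
    have htail : AltFrom (k + l.length + 1) l ↔ AltFrom (k + (x :: l).length + 1 + 1) l :=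
      altFrom_congr (by rw [List.length_cons]; omega)
    rw [List.reverse_cons, altFrom_append, ih, htail, List.length_reverse]
    simp [AltFrom, hstep, and_comm]

theorem altFrom_map {k : ℕ} {w : List ℕ} {f : ℕ → ℕ} (hf : StrictMono f) :
    AltFrom k (w.map f) ↔ AltFrom k w := by
  induction w generalizing k with
  | nil => rfl
  | cons x l ih =>
    rw [List.map_cons, AltFrom, AltFrom, ih]
    cases l <;> simp [StepAt, hf.lt_iff_lt]

/-! ### Reflection words and their contents -/

/-- The number of occurrences of each letter `1, …, n` in `w`, the letter `i + 1` being indexed by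
`i : Fin n`. -/
def content (n : ℕ) (w : List ℕ) : Fin n → ℕ := fun i => w.count ((i : ℕ) + 1)

theorem content_append (n : ℕ) (a b : List ℕ) (i : Fin n) :
    content n (a ++ b) i = content n a i + content n b i :=
  List.count_append

theorem content_eq_of_perm {n : ℕ} {a b : List ℕ} (h : a.Perm b) : content n a = content n b :=
  funext fun _ => h.count_eq _

theorem content_singleton {n : ℕ} (i : Fin n) : content n [(i : ℕ) + 1] = Pi.single i 1 := by
  funext j
  simp [content, List.count_singleton, Pi.single_apply, Fin.ext_iff, @eq_comm _ (j : ℕ)]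

theorem sum_content {n : ℕ} {w : List ℕ} (hw : ∀ x ∈ w, 1 ≤ x ∧ x ≤ n) :
    ∑ i, content n w i = w.length := by
  have hIcc : ∀ x ∈ (w : Multiset ℕ), x ∈ Finset.Ico (0 + 1) (n + 1) := fun x hx => by
    have := hw x hx
    simp only [Finset.mem_Ico]
    omega
  rw [← Multiset.coe_card, ← Multiset.sum_count_eq_card hIcc, ← Finset.sum_Ico_add',
    ← Finset.range_eq_Ico, ← Fin.sum_univ_eq_sum_range (fun i => Multiset.count (i + 1) w)]
  simp only [content, Multiset.coe_count]

theorem perm_of_content_eq {n : ℕ} {a b : List ℕ} (ha : ∀ x ∈ a, 1 ≤ x ∧ x ≤ n)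
    (hb : ∀ x ∈ b, 1 ≤ x ∧ x ≤ n) (h : content n a = content n b) : a.Perm b := by
  refine List.perm_iff_count.2 fun x => ?_
  by_cases hx : 1 ≤ x ∧ x ≤ n
  · simpa [content, Nat.sub_add_cancel hx.1] using congrFun h ⟨x - 1, by omega⟩
  · rw [List.count_eq_zero_of_not_mem fun hxa => hx (ha x hxa),
      List.count_eq_zero_of_not_mem fun hxb => hx (hb x hxb)]

/-- The words over `{1, …, n}` that encode reflection paths. Prefixing the letter `1` of the
starting plate, at a valley, expresses both that `w` is down-up alternating and that its first
letter, if any, is at least `2`. -/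
def reflectionWords (n : ℕ) : Set (List ℕ) :=
  {w | (∀ x ∈ w, 1 ≤ x ∧ x ≤ n) ∧ AltFrom 1 (1 :: w)}

theorem altFrom_one_cons_iff_downUpAlt {w : List ℕ} :
    AltFrom 1 (1 :: w) ↔ DownUpAlt w ∧ (w = [] ∨ 2 ≤ w.headI) := by
  rw [AltFrom, downUpAlt_iff_altFrom, altFrom_congr (k := 1 + 1) (k' := 0) rfl, and_comm]
  cases w <;> simp [StepAt, Nat.succ_le_iff]

/-- The reflection words with prescribed letter multiplicities `z`. -/
def reflectionWordsOf (n : ℕ) (z : Fin n → ℤ) : Set (List ℕ) :=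
  {w ∈ reflectionWords n | ∀ i, (content n w i : ℤ) = z i}

theorem NVec_eq_ncard (n : ℕ) (z : Fin n → ℤ) : NVec n z = (reflectionWordsOf n z).ncard := by
  have h : reflectionWordsOf n z = {w | (∀ x ∈ w, 1 ≤ x ∧ x ≤ n) ∧ DownUpAlt w ∧
      (w = [] ∨ 2 ≤ w.headI) ∧ ∀ i : Fin n, (w.count ((i : ℕ) + 1) : ℤ) = z i} := by
    ext w
    simp only [reflectionWordsOf, reflectionWords, altFrom_one_cons_iff_downUpAlt, content,
      Set.mem_ofPred_eq, and_assoc]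
  rw [h]
  rfl

theorem finite_reflectionWordsOf (n : ℕ) (z : Fin n → ℤ) : (reflectionWordsOf n z).Finite := by
  rcases (reflectionWordsOf n z).eq_empty_or_nonempty with h | ⟨w₀, h₀⟩
  · simp [h]
  · refine (List.finite_toSet w₀.permutations).subset fun w hw => List.mem_permutations.2 ?_
    refine perm_of_content_eq hw.1.1 h₀.1.1 (funext fun i => ?_)
    exact_mod_cast (hw.2 i).trans (h₀.2 i).symm

/-- The down-up alternating words that avoid the extreme letters `1` and `n`. -/
def innerWords (n : ℕ) : Set (List ℕ) :=
  {a | (∀ y ∈ a, 1 < y ∧ y < n) ∧ AltFrom 0 a}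

theorem innerWords_eq_insert {n : ℕ} (hn : 3 ≤ n) :
    innerWords n = insert [2] (List.map Nat.succ '' reflectionWords (n - 2)) := by
  ext a
  constructor
  · rintro ⟨hletters, halt⟩
    refine or_iff_not_imp_left.2 fun h2 => ?_
    have ha : (a.map Nat.pred).map Nat.succ = a := by
      rw [List.map_map]
      refine (List.map_congr_left fun y hy => ?_).trans (List.map_id a)
      exact Nat.succ_pred_eq_of_pos (by have := hletters y hy; omega)
    have hpred : ∀ x ∈ a.map Nat.pred, 1 ≤ x ∧ x ≤ n - 2 := by
      simp only [List.forall_mem_map, Nat.pred_eq_sub_one]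
      intro y hy
      have := hletters y hy
      omega
    refine ⟨a.map Nat.pred, ⟨hpred, ?_⟩, ha⟩
    have hne : a.map Nat.pred ≠ [1] := fun h => h2 (by rw [← ha, h]; rfl)
    rwa [altFrom_one_cons_iff (fun x hx => (hpred x hx).1) hne,
      ← altFrom_map (f := Nat.succ) Order.succ_strictMono, ha]
  · rintro (rfl | ⟨w, ⟨hletters, halt⟩, rfl⟩)
    · refine ⟨fun y hy => ?_, altFrom_singleton 0 2⟩
      rw [List.mem_singleton.1 hy]
      omega
    · refine ⟨List.forall_mem_map.2 fun x hx => ?_, ?_⟩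
      · have := hletters x hx
        omega
      · rw [altFrom_map (f := Nat.succ) Order.succ_strictMono,
          altFrom_congr (k := 0) (k' := 1 + 1) rfl]
        exact halt.2

theorem singleton_two_notMem_map_succ_image (n : ℕ) :
    [2] ∉ List.map Nat.succ '' reflectionWords n := by
  rintro ⟨w, hw, h⟩
  obtain ⟨x, rfl, hx⟩ := List.map_eq_singleton_iff.1 h
  obtain rfl : x = 1 := Nat.succ_injective hx
  simpa [StepAt] using (altFrom_cons_cons.1 hw.2).1

/-! ### Cutting at the first extreme letter -/

/-- The extreme letter of `{1, …, n}` that position `k` of an alternating word admits. -/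
def extremeLetter (n k : ℕ) : ℕ := if k % 2 = 0 then n else 1

theorem stepAt_extremeLetter {n y : ℕ} (k : ℕ) (hy : 1 < y ∧ y < n) :
    StepAt k (extremeLetter n k) y := by
  unfold StepAt extremeLetter
  split_ifs <;> omega

theorem not_stepAt_extremeLetter {n y : ℕ} (k : ℕ) (hy : 1 ≤ y ∧ y ≤ n) :
    ¬ StepAt k y (extremeLetter n k) := by
  unfold StepAt extremeLetter
  split_ifs <;> omega

theorem eq_extremeLetter_of_stepAt {n k x y : ℕ} (hx : x = 1 ∨ x = n) (hy : 1 ≤ y ∧ y ≤ n)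
    (h : StepAt k x y) : x = extremeLetter n k := by
  unfold StepAt at h
  unfold extremeLetter
  split_ifs at h ⊢ <;> omega

/-- Reverses `b` when `k` is even. Used to read the part of a word after its extreme letter at
position `k` so that the reading again starts at a peak. -/
def orient (k : ℕ) (b : List ℕ) : List ℕ := if k % 2 = 0 then b.reverse else b

theorem orient_orient (k : ℕ) (b : List ℕ) : orient k (orient k b) = b := by
  unfold orient
  split_ifs <;> simp

theorem orient_perm (k : ℕ) (b : List ℕ) : (orient k b).Perm b := by
  unfold orient
  split_ifs
  exacts [b.reverse_perm, .refl b]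

theorem altFrom_extremeLetter_cons_orient {n k : ℕ} {b : List ℕ}
    (hb : ∀ x ∈ b, 1 ≤ x ∧ x ≤ n) (hk : (k + b.length) % 2 = 0) :
    AltFrom k (extremeLetter n k :: orient k b) ↔ AltFrom 1 (1 :: b) := by
  rcases Nat.mod_two_eq_zero_or_one k with hk2 | hk2
  · have hne {c : List ℕ} {x : ℕ} (hc : c.length = b.length) : c ≠ [x] := by
      rintro rfl
      rw [List.length_singleton] at hc
      omega
    have hrev : ∀ x ∈ orient k b, ¬ StepAt k x (extremeLetter n k) := fun x hx =>
      not_stepAt_extremeLetter k (hb x ((orient_perm k b).mem_iff.1 hx))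
    rw [altFrom_cons_of_forall_not_stepAt hrev (hne (orient_perm k b).length_eq),
      altFrom_one_cons_iff (fun x hx => (hb x hx).1) (hne rfl), orient, if_pos hk2, altFrom_reverse]
    exact altFrom_congr (by omega)
  · rw [extremeLetter, orient, if_neg (by omega), if_neg (by omega)]
    exact altFrom_congr hk2

/-- Joins the inner word `a` before the first extreme letter of a word to the word `b` read off from
the part after it. -/
def glue (n : ℕ) (a b : List ℕ) : List ℕ :=
  a ++ extremeLetter n a.length :: orient a.length b

theorem glue_perm (n : ℕ) (a b : List ℕ) :
    (glue n a b).Perm ((a ++ [extremeLetter n a.length]) ++ b) := by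
  rw [List.append_assoc]
  exact ((orient_perm a.length b).cons _).append_left a

theorem glue_injective (n : ℕ) (a : List ℕ) : Function.Injective (glue n a) := fun b b' h => by
  have hbb' : orient a.length b = orient a.length b' := by simpa [glue] using h
  rw [← orient_orient a.length b, hbb', orient_orient]

theorem forall_mem_glue_iff {n : ℕ} (hn : 2 ≤ n) {a b : List ℕ} (ha : a ∈ innerWords n) :
    (∀ x ∈ glue n a b, 1 ≤ x ∧ x ≤ n) ↔ ∀ x ∈ b, 1 ≤ x ∧ x ≤ n := by
  have hinner : ∀ x ∈ a, 1 ≤ x ∧ x ≤ n := fun x hx => ⟨(ha.1 x hx).1.le, (ha.1 x hx).2.le⟩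
  have hextreme : 1 ≤ extremeLetter n a.length ∧ extremeLetter n a.length ≤ n := by
    unfold extremeLetter
    split_ifs <;> omega
  simp only [(glue_perm n a b).mem_iff, List.forall_mem_append, List.forall_mem_singleton]
  exact and_iff_right ⟨hinner, hextreme⟩

theorem glue_ne_singleton_one {n : ℕ} (hn : 2 ≤ n) {a b : List ℕ} (ha : a ∈ innerWords n) :
    glue n a b ≠ [1] := by
  intro h
  cases a with
  | nil =>
    have h1 : n = 1 := by simpa [extremeLetter] using (List.cons.inj h).1
    omega
  | cons y a => exact (ha.1 y (by simp)).1.ne' (List.cons.inj h).1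

theorem altFrom_one_cons_glue {n : ℕ} (hn : 2 ≤ n) {a b : List ℕ} (ha : a ∈ innerWords n)
    (hb : ∀ x ∈ b, 1 ≤ x ∧ x ≤ n) (hab : (a.length + b.length) % 2 = 0) :
    AltFrom 1 (1 :: glue n a b) ↔ AltFrom 1 (1 :: b) := by
  have hone : ∀ x ∈ glue n a b, 1 ≤ x := fun x hx => ((forall_mem_glue_iff hn ha).2 hb x hx).1
  have hextreme : ∀ y ∈ a, StepAt (0 + a.length) (extremeLetter n a.length) y := fun y hy => by
    rw [zero_add]
    exact stepAt_extremeLetter _ (ha.1 y hy)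
  rw [altFrom_one_cons_iff hone (glue_ne_singleton_one hn ha), glue,
    altFrom_append_cons_of_forall_stepAt hextreme, zero_add,
    altFrom_extremeLetter_cons_orient hb hab]
  exact and_iff_right ha.2

/-- The letter multiplicities left over from `z` after the inner word `a` and the extreme letter
that follows it. -/
def residualContent (n : ℕ) (z : Fin n → ℤ) (a : List ℕ) : Fin n → ℤ :=
  fun i => z i - content n (a ++ [extremeLetter n a.length]) i

theorem glue_mem_reflectionWordsOf_iff {n : ℕ} (hn : 2 ≤ n) {z : Fin n → ℤ}
    (hz : Odd (∑ i, z i)) {a b : List ℕ} (ha : a ∈ innerWords n) :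
    glue n a b ∈ reflectionWordsOf n z ↔ b ∈ reflectionWordsOf n (residualContent n z a) := by
  have hcontent : (∀ i, (content n (glue n a b) i : ℤ) = z i) ↔
      ∀ i, (content n b i : ℤ) = residualContent n z a i := by
    refine forall_congr' fun i => ?_
    rw [residualContent, content_eq_of_perm (glue_perm n a b), content_append]
    omega
  have hparity (hb : ∀ x ∈ b, 1 ≤ x ∧ x ≤ n)
      (h : ∀ i, (content n (glue n a b) i : ℤ) = z i) : (a.length + b.length) % 2 = 0 := by
    simp only [← h, ← Nat.cast_sum, sum_content ((forall_mem_glue_iff hn ha).2 hb),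
      (glue_perm n a b).length_eq, List.length_append, List.length_singleton] at hz
    have := Nat.odd_iff.1 (by exact_mod_cast hz)
    omega
  simp only [reflectionWordsOf, reflectionWords, Set.mem_ofPred_eq, forall_mem_glue_iff hn ha,
    ← hcontent, and_assoc]
  refine and_congr_right fun hb => and_congr_left fun h => ?_
  exact altFrom_one_cons_glue hn ha hb (hparity hb h)

/-- The longest prefix of `w` without extreme letters. -/
def innerPrefix (n : ℕ) (w : List ℕ) : List ℕ := w.takeWhile fun y => 1 < y ∧ y < n

theorem innerPrefix_glue {n : ℕ} {a : List ℕ} (ha : a ∈ innerWords n) (b : List ℕ) :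
    innerPrefix n (glue n a b) = a := by
  have hextreme : ¬ (1 < extremeLetter n a.length ∧ extremeLetter n a.length < n) := by
    unfold extremeLetter
    split_ifs <;> omega
  rw [innerPrefix, glue, List.takeWhile_append_of_pos (by simpa using ha.1),
    List.takeWhile_cons_of_neg (by simpa using hextreme), List.append_nil]

theorem exists_innerPrefix_append_cons {n : ℕ} {w : List ℕ} (hw : ∀ x ∈ w, 1 ≤ x ∧ x ≤ n)
    (hextreme : 1 ∈ w ∨ n ∈ w) :
    ∃ x b, innerPrefix n w ++ x :: b = w ∧ (x = 1 ∨ x = n) := by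
  have hsplit : innerPrefix n w ++ w.dropWhile (fun y => 1 < y ∧ y < n) = w :=
    List.takeWhile_append_dropWhile
  have hhead := List.head?_dropWhile_not (fun y => 1 < y ∧ y < n) w
  rcases hdrop : w.dropWhile (fun y => 1 < y ∧ y < n) with _ | ⟨x, b⟩
  · have hall := List.dropWhile_eq_nil_iff.1 hdrop
    rcases hextreme with h | h <;> simpa using hall _ h
  · rw [hdrop] at hsplit hhead
    have hx := hw x (by rw [← hsplit]; simp)
    refine ⟨x, b, hsplit, ?_⟩
    simp only [List.head?_cons, decide_eq_false_iff_not] at hhead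
    omega

theorem exists_glue_innerPrefix_eq {n : ℕ} (hn : 2 ≤ n) {w : List ℕ} (hw : w ∈ reflectionWords n)
    (hextreme : 1 ∈ w ∨ n ∈ w) :
    innerPrefix n w ∈ innerWords n ∧ ∃ b, glue n (innerPrefix n w) b = w := by
  have hprefix : ∀ y ∈ innerPrefix n w, 1 < y ∧ y < n := fun y hy => by
    simpa using List.mem_takeWhile_imp hy
  obtain ⟨x, b, hw', hx⟩ := exists_innerPrefix_append_cons hw.1 hextreme
  have halt : AltFrom 1 ((1 :: innerPrefix n w) ++ x :: b) := by
    rw [List.cons_append, hw']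
    exact hw.2
  obtain ⟨hinner, -, hstep⟩ := altFrom_append.1 halt
  set t := (1 :: innerPrefix n w).getLast (List.cons_ne_nil _ _)
  have ht : 1 ≤ t ∧ t ≤ n := by
    rcases List.mem_cons.1 (List.getLast_mem (List.cons_ne_nil 1 (innerPrefix n w))) with ht | ht
    · omega
    · exact ⟨(hprefix t ht).1.le, (hprefix t ht).2.le⟩
  have hxt : StepAt (innerPrefix n w).length x t :=
    (stepAt_congr (by rw [List.length_cons]; omega)).1
      (hstep t (List.getLast?_eq_some_getLast _) x rfl)
  refine ⟨⟨hprefix, (altFrom_congr (k := 1 + 1) (k' := 0) rfl).1 hinner.2⟩,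
    orient (innerPrefix n w).length b, ?_⟩
  rw [glue, orient_orient, ← eq_extremeLetter_of_stepAt hx ht hxt, hw']

theorem one_mem_or_mem_of_mem_reflectionWordsOf {n : ℕ} (hn : 0 < n) {z : Fin n → ℤ}
    (hz : 1 ≤ z ⟨0, hn⟩ ∨ 1 ≤ z ⟨n - 1, by omega⟩) {w : List ℕ} (hw : w ∈ reflectionWordsOf n z) :
    1 ∈ w ∨ n ∈ w := by
  have hmem {i : Fin n} (hi : 1 ≤ z i) : (i : ℕ) + 1 ∈ w := by
    rw [← hw.2 i] at hi
    exact List.count_pos_iff.1 (by exact_mod_cast hi)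
  refine hz.imp hmem fun h => ?_
  have hlast := hmem h
  rwa [Nat.sub_add_cancel hn] at hlast

theorem reflectionWordsOf_inter_innerPrefix_preimage {n : ℕ} (hn : 2 ≤ n) {z : Fin n → ℤ}
    (hz : Odd (∑ i, z i)) (hextreme : ∀ w ∈ reflectionWordsOf n z, 1 ∈ w ∨ n ∈ w)
    {a : List ℕ} (ha : a ∈ innerWords n) :
    reflectionWordsOf n z ∩ innerPrefix n ⁻¹' {a} =
      glue n a '' reflectionWordsOf n (residualContent n z a) := by
  ext w
  constructor
  · rintro ⟨hw, rfl⟩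
    obtain ⟨b, hb⟩ := (exists_glue_innerPrefix_eq hn hw.1 (hextreme w hw)).2
    exact ⟨b, (glue_mem_reflectionWordsOf_iff hn hz ha).1 (hb.symm ▸ hw), hb⟩
  · rintro ⟨b, hb, rfl⟩
    exact ⟨(glue_mem_reflectionWordsOf_iff hn hz ha).2 hb, innerPrefix_glue ha b⟩

theorem finite_innerWords_inter_support_NVec_residualContent {n : ℕ} (hn : 2 ≤ n) {z : Fin n → ℤ}
    (hz : Odd (∑ i, z i)) :
    (innerWords n ∩ Function.support fun a => NVec n (residualContent n z a)).Finite := by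
  refine ((finite_reflectionWordsOf n z).image (innerPrefix n)).subset ?_
  rintro a ⟨ha, hne⟩
  rw [Function.mem_support, NVec_eq_ncard] at hne
  obtain ⟨b, hb⟩ := Set.nonempty_of_ncard_ne_zero hne
  exact ⟨glue n a b, (glue_mem_reflectionWordsOf_iff hn hz ha).2 hb, innerPrefix_glue ha b⟩

/-! ### Summation over prefixes -/

theorem NVec_eq_finsum_innerWords {n : ℕ} (hn : 2 ≤ n) {z : Fin n → ℤ} (hz : Odd (∑ i, z i))
    (hextreme : ∀ w ∈ reflectionWordsOf n z, 1 ∈ w ∨ n ∈ w) :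
    NVec n z = ∑ᶠ a ∈ innerWords n, NVec n (residualContent n z a) := by
  classical
  rw [NVec_eq_ncard, ← finsum_one,
    finsum_mem_fiberwise ((finite_reflectionWordsOf n z).inter_of_left _) (innerPrefix n)]
  refine finsum_congr fun a => ?_
  rw [finsum_one]
  by_cases ha : a ∈ innerWords n
  · rw [finsum_eq_if, if_pos ha, reflectionWordsOf_inter_innerPrefix_preimage hn hz hextreme ha,
      Set.ncard_image_of_injective _ (glue_injective n a), NVec_eq_ncard]
  · have hempty : reflectionWordsOf n z ∩ innerPrefix n ⁻¹' {a} = ∅ := by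
      refine Set.eq_empty_of_forall_notMem ?_
      rintro w ⟨hw, rfl⟩
      exact ha (exists_glue_innerPrefix_eq hn hw.1 (hextreme w hw)).1
    rw [finsum_eq_if, if_neg ha, hempty, Set.ncard_empty]

theorem finsum_mem_innerWords {n : ℕ} (hn : 3 ≤ n) {M : Type*} [AddCommMonoid M] {f : List ℕ → M}
    (hf : (innerWords n ∩ Function.support f).Finite) :
    ∑ᶠ a ∈ innerWords n, f a =
      f [2] + ∑ᶠ w ∈ reflectionWords (n - 2), f (w.map Nat.succ) := by
  rw [innerWords_eq_insert hn] at hf ⊢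
  rw [finsum_mem_insert' f (singleton_two_notMem_map_succ_image _)
    (hf.subset (Set.inter_subset_inter_left _ (Set.subset_insert _ _))),
    finsum_mem_image (List.map_injective_iff.2 Nat.succ_injective).injOn]

theorem finite_reflectionWords_inter_support_comp_map_succ {n : ℕ} (hn : 3 ≤ n) {M : Type*}
    [Zero M] {f : List ℕ → M} (hf : (innerWords n ∩ Function.support f).Finite) :
    (reflectionWords (n - 2) ∩ Function.support fun w => f (w.map Nat.succ)).Finite := by
  refine (hf.preimage (List.map_injective_iff.2 Nat.succ_injective).injOn).subset ?_
  rintro w ⟨hw, hfw⟩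
  refine ⟨?_, hfw⟩
  rw [innerWords_eq_insert hn]
  exact Set.mem_insert_of_mem _ ⟨w, hw, rfl⟩

theorem finsum_mem_reflectionWords {m : ℕ} {f : List ℕ → ℕ} {g : (Fin m → ℕ) → ℕ}
    (hf : (reflectionWords m ∩ Function.support f).Finite)
    (hfg : ∀ w ∈ reflectionWords m, f w = g (content m w)) :
    ∑ᶠ w ∈ reflectionWords m, f w = ∑ᶠ u : Fin m → ℕ, NVec m (fun i => (u i : ℤ)) * g u := by
  rw [finsum_mem_fiberwise hf (content m)]
  refine finsum_congr fun u => ?_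
  have hfiber : reflectionWords m ∩ content m ⁻¹' {u} = reflectionWordsOf m fun i => (u i : ℤ) := by
    ext w
    simp [reflectionWordsOf, funext_iff]
  have hconst : ∀ w ∈ reflectionWordsOf m (fun i => (u i : ℤ)), f w = g u := by
    rw [← hfiber]
    rintro w ⟨hw, rfl⟩
    exact hfg w hw
  rw [hfiber, finsum_mem_congr rfl hconst, NVec_eq_ncard, ← finsum_one,
    finsum_mem_mul]
  simp only [one_mul]

theorem NVec_zero (m : ℕ) : NVec m 0 = 1 := by
  rw [NVec_eq_ncard, Set.ncard_eq_one]
  refine ⟨[], Set.eq_singleton_iff_unique_mem.2 ⟨?_, fun w hw => ?_⟩⟩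
  · simp [reflectionWordsOf, reflectionWords, altFrom_singleton, content]
  · have hlen : (w.length : ℤ) = 0 := by
      simp [← sum_content hw.1.1, hw.2]
    exact List.length_eq_zero_iff.1 (by exact_mod_cast hlen)

theorem finite_support_NVec_mul {m : ℕ} {f : List ℕ → ℕ} {g : (Fin m → ℕ) → ℕ}
    (hf : (reflectionWords m ∩ Function.support f).Finite)
    (hfg : ∀ w ∈ reflectionWords m, f w = g (content m w)) :
    (Function.support fun u : Fin m → ℕ => NVec m (fun i => (u i : ℤ)) * g u).Finite := by
  refine (hf.image (content m)).subset fun u hu => ?_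
  obtain ⟨hN, hg⟩ := mul_ne_zero_iff.1 hu
  rw [NVec_eq_ncard] at hN
  obtain ⟨w, hw⟩ := Set.nonempty_of_ncard_ne_zero hN
  obtain rfl : content m w = u := funext fun i => Nat.cast_injective (hw.2 i)
  exact ⟨w, ⟨hw.1, by rwa [Function.mem_support, hfg w hw.1]⟩, rfl⟩

/-- The vector `ū = (0, u₁, …, u_{n-2}, 0)` that extends multiplicities of the letters
`2, …, n - 1` by zero to the extreme letters. -/
def padVec (n : ℕ) (u : Fin (n - 2) → ℕ) : Fin n → ℤ :=
  fun i => if h : 1 ≤ (i : ℕ) ∧ (i : ℕ) ≤ n - 2 then (u ⟨(i : ℕ) - 1, by omega⟩ : ℤ) else 0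

theorem padVec_zero (n : ℕ) : padVec n 0 = 0 := by
  funext i
  simp [padVec]

theorem content_map_succ {n : ℕ} {w : List ℕ} (hw : ∀ x ∈ w, 1 ≤ x ∧ x ≤ n - 2) (i : Fin n) :
    (content n (w.map Nat.succ) i : ℤ) = padVec n (content (n - 2) w) i := by
  rw [content, ← Nat.succ_eq_add_one,
    List.count_map_of_injective _ _ Nat.succ_injective, padVec]
  split_ifs with hi
  · simp only [content, Nat.sub_add_cancel hi.1]
  · rw [List.count_eq_zero_of_not_mem fun h => hi (hw _ h), Nat.cast_zero]

theorem residualContent_of_extremeLetter {n : ℕ} {z : Fin n → ℤ} {a : List ℕ} {j : Fin n}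
    (hj : extremeLetter n a.length = (j : ℕ) + 1) :
    residualContent n z a = z - (fun i => (content n a i : ℤ)) - Pi.single j 1 := by
  funext i
  rw [residualContent, content_append, hj, content_singleton]
  simp only [Pi.sub_apply, Pi.single_apply]
  push_cast
  ring

theorem residualContent_singleton_two {n : ℕ} (hn : 2 ≤ n) (z : Fin n → ℤ) :
    residualContent n z [2] =
      z - Pi.single ⟨0, by omega⟩ 1 - Pi.single ⟨1, by omega⟩ 1 := by
  have hcontent : (fun i => (content n [2] i : ℤ)) = Pi.single ⟨1, by omega⟩ 1 := by
    funext i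
    have h := congrFun (content_singleton (⟨1, by omega⟩ : Fin n)) i
    simp only [Pi.single_apply] at h ⊢
    rw [h]
    push_cast
    rfl
  rw [residualContent_of_extremeLetter (j := ⟨0, by omega⟩) rfl, hcontent, sub_right_comm]

theorem residualContent_map_succ {n : ℕ} (hn : 2 ≤ n) (z : Fin n → ℤ) {w : List ℕ}
    (hw : ∀ x ∈ w, 1 ≤ x ∧ x ≤ n - 2) :
    residualContent n z (w.map Nat.succ) = z - padVec n (content (n - 2) w) -
      Pi.single (if Odd (∑ i, content (n - 2) w i) then ⟨0, by omega⟩ else ⟨n - 1, by omega⟩)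
        1 := by
  rw [residualContent_of_extremeLetter, funext (content_map_succ hw)]
  rw [List.length_map, sum_content hw, extremeLetter]
  split_ifs with heven hodd hodd
  · exact absurd heven (by rw [Nat.odd_iff.1 hodd]; decide)
  · exact (Nat.sub_add_cancel (by omega)).symm
  · rfl
  · exact absurd (Nat.even_iff.1 (Nat.not_odd_iff_even.1 hodd)) heven

theorem stmt5_general (n : ℕ) (hn : 3 ≤ n) (v : Fin n → ℕ)
    (hextreme : 1 ≤ v ⟨0, Nat.zero_lt_of_lt hn⟩ ∨ 1 ≤ v ⟨n - 1, Nat.sub_one_lt_of_lt hn⟩)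
    (hodd : Odd (∑ i, v i)) :
    NVec n (fun i => (v i : ℤ)) =
      NVec n ((fun i => (v i : ℤ)) - Pi.single ⟨0, Nat.zero_lt_of_lt hn⟩ 1
        - Pi.single ⟨1, Nat.lt_of_succ_lt hn⟩ 1)
      + NVec n ((fun i => (v i : ℤ)) - Pi.single ⟨n - 1, Nat.sub_one_lt_of_lt hn⟩ 1)
      + ∑ᶠ u ∈ {u : Fin (n - 2) → ℕ | Odd (∑ i, u i)},
          NVec (n - 2) (fun i => (u i : ℤ)) *
            NVec n ((fun i => (v i : ℤ)) - padVec n u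
              - Pi.single ⟨0, Nat.zero_lt_of_lt hn⟩ 1)
      + ∑ᶠ u ∈ {u : Fin (n - 2) → ℕ | u ≠ 0 ∧ Even (∑ i, u i)},
          NVec (n - 2) (fun i => (u i : ℤ)) *
            NVec n ((fun i => (v i : ℤ)) - padVec n u
              - Pi.single ⟨n - 1, Nat.sub_one_lt_of_lt hn⟩ 1) := by
  set z : Fin n → ℤ := fun i => (v i : ℤ)
  have hz : Odd (∑ i, z i) := by
    rw [← Nat.cast_sum]
    exact_mod_cast hodd
  let g (u : Fin (n - 2) → ℕ) : ℕ := NVec n (z - padVec n u - Pi.single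
    (if Odd (∑ i, u i) then ⟨0, Nat.zero_lt_of_lt hn⟩ else ⟨n - 1, Nat.sub_one_lt_of_lt hn⟩) 1)
  have hg_odd (u) (hu : Odd (∑ i, u i)) :
      g u = NVec n (z - padVec n u - Pi.single ⟨0, Nat.zero_lt_of_lt hn⟩ 1) := by
    simp only [g, if_pos hu]
  have hg_even (u) (hu : Even (∑ i, u i)) :
      g u = NVec n (z - padVec n u - Pi.single ⟨n - 1, Nat.sub_one_lt_of_lt hn⟩ 1) := by
    simp only [g, if_neg (Nat.not_odd_iff_even.2 hu)]
  have hzero : NVec (n - 2) (fun i => ((0 : Fin (n - 2) → ℕ) i : ℤ)) = 1 := NVec_zero (n - 2)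
  have hg (w) (hw : w ∈ reflectionWords (n - 2)) :
      NVec n (residualContent n z (w.map Nat.succ)) = g (content (n - 2) w) :=
    congrArg (NVec n) (residualContent_map_succ (by omega) z hw.1)
  have hfin := finite_innerWords_inter_support_NVec_residualContent (by omega) hz
  have hfin_succ := finite_reflectionWords_inter_support_comp_map_succ hn hfin
  rw [NVec_eq_finsum_innerWords (by omega) hz fun w => one_mem_or_mem_of_mem_reflectionWordsOf
      (by omega) (hextreme.imp Nat.one_le_cast.2 Nat.one_le_cast.2),
    finsum_mem_innerWords hn hfin, residualContent_singleton_two (by omega),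
    finsum_mem_reflectionWords hfin_succ hg,
    finsum_eq_zero_add_odd_add_even (finite_support_NVec_mul hfin_succ hg), hzero, one_mul,
    hg_even 0 (by simp), padVec_zero, sub_zero, ← add_assoc, ← add_assoc]
  exact congrArg₂ _ (congrArg _ (finsum_mem_congr rfl fun u hu => by rw [hg_odd u hu]))
    (finsum_mem_congr rfl fun u hu => by rw [hg_even u hu.2])

theorem stmt5 (n : ℕ) (hn : 3 ≤ n) (v : Fin n → ℕ)
    (h1 : 1 ≤ v ⟨0, by omega⟩) (hlast : 1 ≤ v ⟨n - 1, by omega⟩)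
    (hodd : Odd (∑ i, v i)) :
    NVec n (fun i => (v i : ℤ)) =
      NVec n ((fun i => (v i : ℤ)) - Pi.single ⟨0, by omega⟩ 1 - Pi.single ⟨1, by omega⟩ 1)
      + NVec n ((fun i => (v i : ℤ)) - Pi.single ⟨n - 1, by omega⟩ 1)
      + ∑ᶠ u ∈ {u : Fin (n - 2) → ℕ | Odd (∑ i, u i)},
          NVec (n - 2) (fun i => (u i : ℤ)) *
            NVec n ((fun i => (v i : ℤ))
              - (fun i : Fin n => if h : 1 ≤ (i : ℕ) ∧ (i : ℕ) ≤ n - 2 then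
                  (u ⟨(i : ℕ) - 1, by omega⟩ : ℤ) else 0)
              - Pi.single ⟨0, by omega⟩ 1)
      + ∑ᶠ u ∈ {u : Fin (n - 2) → ℕ | u ≠ 0 ∧ Even (∑ i, u i)},
          NVec (n - 2) (fun i => (u i : ℤ)) *
            NVec n ((fun i => (v i : ℤ))
              - (fun i : Fin n => if h : 1 ≤ (i : ℕ) ∧ (i : ℕ) ≤ n - 2 then
                  (u ⟨(i : ℕ) - 1, by omega⟩ : ℤ) else 0)
              - Pi.single ⟨n - 1, by omega⟩ 1) := by
  exact stmt5_general n hn v (Or.inl h1) hodd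
end

section
/- Let n ≥ 1 and let v = (v_1,…,v_n) be a vector of nonnegative integers with v_1 + v_2 + ⋯ + v_n even. Then N_n(v) = N_n(r(v)), where r(v) = (v_n, v_{n−1}, …, v_1) is the reverse of v. -/
/-! Reversing a down-up word of even length gives an up-down word, and complementing its letters
(`x ↦ n + 1 - x`) turns that back into a down-up word, now with the reversed letter counts. The
first-letter condition takes care of itself: a down-up word over `{1, …, n}` of length at least two
has `w₁ > w₂ ≥ 1`. -/

theorem downUpAlt_iff_getElem {w : List ℕ} :
    DownUpAlt w ↔ ∀ k (hk : k + 1 < w.length),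
      (Even k → w[k + 1] < w[k]) ∧ (Odd k → w[k] < w[k + 1]) := by
  refine forall₂_congr fun k hk => ?_
  rw [List.getD_eq_getElem _ _ hk, List.getD_eq_getElem _ _ (Nat.lt_of_succ_lt hk)]
  rcases Nat.even_or_odd k with hk' | hk'
  · simp [Nat.even_iff.mp hk', hk', Nat.not_odd_iff_even.mpr hk']
  · simp [Nat.odd_iff.mp hk', hk', Nat.not_even_iff_odd.mpr hk']

theorem DownUpAlt.reverse_map {w : List ℕ} {f : ℕ → ℕ} (hw : DownUpAlt w)
    (hf : StrictAntiOn f {x | x ∈ w}) (hlen : Even w.length) : DownUpAlt (w.map f).reverse := by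
  rw [downUpAlt_iff_getElem] at hw ⊢
  intro k hk
  simp only [List.length_reverse, List.length_map] at hk
  obtain ⟨j, hj⟩ : ∃ j, w.length = j + k + 2 := ⟨w.length - (k + 2), by omega⟩
  have hfst : w.length - 1 - k = j + 1 := by omega
  have hsnd : w.length - 1 - (k + 1) = j := by omega
  have heven : Even j ↔ Even k := by grind
  have hodd : Odd j ↔ Odd k := by grind
  have hjw : j + 1 < w.length := by omega
  have hmem : ∀ i (hi : i < w.length), w[i] ∈ {x | x ∈ w} := fun i hi => List.getElem_mem hi
  simp only [List.getElem_reverse, List.getElem_map, List.length_map, hfst, hsnd]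
  exact ⟨fun hk_even => hf (hmem _ _) (hmem _ _) ((hw j hjw).1 (heven.mpr hk_even)),
    fun hk_odd => hf (hmem _ _) (hmem _ _) ((hw j hjw).2 (hodd.mpr hk_odd))⟩

theorem DownUpAlt.eq_nil_or_two_le_headI {w : List ℕ} (hw : DownUpAlt w)
    (hpos : ∀ x ∈ w, 1 ≤ x) (hlen : w.length ≠ 1) : w = [] ∨ 2 ≤ w.headI := by
  match w with
  | [] => exact Or.inl rfl
  | [_] => exact absurd rfl hlen
  | a :: b :: _ =>
    have hba : b < a := by simpa using hw 0 (by simp)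
    have hb : 1 ≤ b := hpos b (by simp)
    exact Or.inr (hb.trans_lt hba)

theorem length_eq_sum_count_succ {n : ℕ} {w : List ℕ} (hw : ∀ x ∈ w, x ∈ Finset.Icc 1 n) :
    w.length = ∑ i : Fin n, w.count ((i : ℕ) + 1) :=
  calc w.length = ∑ a ∈ Finset.Icc 1 n, w.count a := by
        simpa using (Multiset.sum_count_eq_card (m := (w : Multiset ℕ)) (by simpa using hw)).symm
    _ = ∑ i : Fin n, w.count ((i : ℕ) + 1) := by
        rw [Fin.sum_univ_eq_sum_range (fun i => w.count (i + 1)), Finset.range_eq_Ico]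
        exact (Finset.sum_Ico_add' (fun a => w.count a) 0 n 1).symm

/-- The reverse-complement of a word over `{1, …, n}`: its letters in reverse order, each letter `x`
replaced by `n + 1 - x`. -/
def revCompl (n : ℕ) (w : List ℕ) : List ℕ :=
  (w.map (n + 1 - ·)).reverse

@[simp]
theorem length_revCompl (n : ℕ) (w : List ℕ) : (revCompl n w).length = w.length := by
  simp [revCompl]

section revCompl

variable {n : ℕ} {w : List ℕ}

theorem revCompl_revCompl (hw : ∀ x ∈ w, x ≤ n + 1) : revCompl n (revCompl n w) = w := by
  simp only [revCompl, List.map_reverse, List.reverse_reverse, List.map_map]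
  exact (List.map_congr_left fun x hx => Nat.sub_sub_self (hw x hx)).trans w.map_id

theorem mem_Icc_of_mem_revCompl (hw : ∀ x ∈ w, x ∈ Finset.Icc 1 n) :
    ∀ x ∈ revCompl n w, x ∈ Finset.Icc 1 n := by
  simp only [revCompl, List.mem_reverse, List.forall_mem_map, Finset.mem_Icc] at hw ⊢
  intro x hx
  have := hw x hx
  omega

theorem count_revCompl (hw : ∀ x ∈ w, x ≤ n + 1) {a : ℕ} (ha : a ≤ n + 1) :
    (revCompl n w).count a = w.count (n + 1 - a) := by
  rw [revCompl, List.count_reverse, List.count, List.count, List.countP_map]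
  refine List.countP_congr fun x hx => ?_
  have := hw x hx
  simp only [Function.comp_apply, beq_iff_eq]
  omega

theorem DownUpAlt.revCompl (hw : DownUpAlt w) (hle : ∀ x ∈ w, x ≤ n + 1)
    (hlen : Even w.length) : DownUpAlt (revCompl n w) :=
  hw.reverse_map (fun _ _ y hy hxy => Nat.sub_lt_sub_left (hxy.trans_le (hle y hy)) hxy) hlen

end revCompl

/-- The words counted by `NVec n v`, encoding the reflection paths within `n` plates that start at
the first plate and reflect `v i` times off plate `i + 1`. -/
structure IsPlateWord (n : ℕ) (v : Fin n → ℤ) (w : List ℕ) : Prop where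
  mem_Icc : ∀ x ∈ w, x ∈ Finset.Icc 1 n
  downUpAlt : DownUpAlt w
  eq_nil_or_two_le_headI : w = [] ∨ 2 ≤ w.headI
  count_eq : ∀ i : Fin n, (w.count ((i : ℕ) + 1) : ℤ) = v i

theorem NVec_eq_card (n : ℕ) (v : Fin n → ℤ) : NVec n v = Nat.card {w // IsPlateWord n v w} := by
  have hiff (w : List ℕ) : ((∀ x ∈ w, 1 ≤ x ∧ x ≤ n) ∧ DownUpAlt w ∧ (w = [] ∨ 2 ≤ w.headI) ∧
      ∀ i : Fin n, (w.count ((i : ℕ) + 1) : ℤ) = v i) ↔ IsPlateWord n v w := by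
    simp only [← Finset.mem_Icc]
    exact ⟨fun ⟨hmem, halt, hhead, hcount⟩ => ⟨hmem, halt, hhead, hcount⟩,
      fun ⟨hmem, halt, hhead, hcount⟩ => ⟨hmem, halt, hhead, hcount⟩⟩
  simp only [NVec, hiff]

namespace IsPlateWord

variable {n : ℕ} {v : Fin n → ℤ} {w : List ℕ}

theorem le_succ (h : IsPlateWord n v w) : ∀ x ∈ w, x ≤ n + 1 := fun x hx =>
  (Finset.mem_Icc.mp (h.mem_Icc x hx)).2.trans n.le_succ

theorem length_eq_sum (h : IsPlateWord n v w) : (w.length : ℤ) = ∑ i, v i := by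
  simp only [length_eq_sum_count_succ h.mem_Icc, Nat.cast_sum, h.count_eq]

theorem revCompl (h : IsPlateWord n v w) (hv : Even (∑ i, v i)) :
    IsPlateWord n (v ∘ Fin.rev) (revCompl n w) := by
  have hlen : Even w.length := by rwa [← Int.even_coe_nat, h.length_eq_sum]
  have hmem := mem_Icc_of_mem_revCompl h.mem_Icc
  have halt := h.downUpAlt.revCompl h.le_succ hlen
  refine ⟨hmem, halt, ?_, fun i => ?_⟩
  · refine halt.eq_nil_or_two_le_headI (fun x hx => (Finset.mem_Icc.mp (hmem x hx)).1) ?_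
    rw [length_revCompl]
    grind
  · have hi : n + 1 - (i + 1 : ℕ) = i.rev + 1 := by rw [Fin.val_rev]; omega
    rw [count_revCompl h.le_succ (by omega), hi, h.count_eq, Function.comp_apply]

end IsPlateWord

theorem NVec_comp_rev {n : ℕ} (v : Fin n → ℤ) (hv : Even (∑ i, v i)) :
    NVec n (v ∘ Fin.rev) = NVec n v := by
  have hv_rev : Even (∑ i, (v ∘ Fin.rev) i) := by
    rwa [show ∑ i, (v ∘ Fin.rev) i = ∑ i, v i from Equiv.sum_comp Fin.revPerm v]
  have hback {w : List ℕ} (h : IsPlateWord n (v ∘ Fin.rev) w) :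
      IsPlateWord n v (revCompl n w) := by
    simpa [Function.comp_assoc, Fin.rev_involutive.comp_self] using h.revCompl hv_rev
  rw [NVec_eq_card, NVec_eq_card]
  exact Nat.card_congr
    { toFun w := ⟨revCompl n w, hback w.2⟩
      invFun w := ⟨revCompl n w, w.2.revCompl hv⟩
      left_inv w := Subtype.ext (revCompl_revCompl w.2.le_succ)
      right_inv w := Subtype.ext (revCompl_revCompl w.2.le_succ) }

theorem stmt7 (n : ℕ) (hn : 1 ≤ n) (v : Fin n → ℕ) (heven : Even (∑ i, v i)) :
    NVec n (fun i => (v i : ℤ)) =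
      NVec n (fun i => (v ⟨n - 1 - (i : ℕ), by omega⟩ : ℤ)) := by
  have hv : Even (∑ i, (v i : ℤ)) := by exact_mod_cast heven
  have hrev (i : Fin n) : i.rev = ⟨n - 1 - (i : ℕ), by omega⟩ := Fin.ext <| by
    simp only [Fin.val_rev]
    omega
  simpa only [Function.comp_def, hrev] using (NVec_comp_rev (fun i => (v i : ℤ)) hv).symm
end

section
/- (Tick Lemma) For all integers n ≥ 1 and i, j ≥ 0: N(n, i, j) = N(n−1, i−1, j) + Σ_{k ≥ 0} N(n−1, i−k, j−1−k), where the sum has only finitely many nonzero terms (all terms whose arguments contain a negative entry are 0 by convention). -/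
/-- `N3 a b c` is the number of down-up alternating words over `{1,2,3}` that are
empty or have first letter `≥ 2`, containing exactly `a` ones, `b` twos and
`c` threes (it is `0` if some argument is negative). -/
noncomputable def N3 (a b c : ℤ) : ℕ :=
  Nat.card {w : List ℕ // (∀ x ∈ w, 1 ≤ x ∧ x ≤ 3) ∧ DownUpAlt w ∧
    (w = [] ∨ 2 ≤ w.headI) ∧
    (w.count 1 : ℤ) = a ∧ (w.count 2 : ℤ) = b ∧ (w.count 3 : ℤ) = c}

/-!
A word counted by `N3` that contains a one has at least two letters, and its down-steps are `21`,
`31` or `32`. Removing an initial `21` or `31` leaves a word counted by `N3`, whereas after an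
initial `32` the next letter must again be `3`. The word is therefore either `21 v` or
`(32)ᵏ 31 v` for a unique `k`, with `v` counted by `N3`.
-/

theorem eq_finsum_of_eq_add_succ {M : Type*} [AddCommMonoid M] {f g : ℕ → M}
    (hfg : ∀ k, f k = g k + f (k + 1)) (hf : ∀ᶠ k in Filter.atTop, f k = 0) :
    f 0 = ∑ᶠ k, g k := by
  obtain ⟨m, hm⟩ := Filter.eventually_atTop.1 hf
  have hg : Function.support g ⊆ Finset.range m := by
    intro k hk
    by_contra hkm
    have hmk : m ≤ k := by simpa using hkm
    exact hk (by simpa [hm k hmk, hm (k + 1) (by omega)] using (hfg k).symm)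
  have partial_sum (l : ℕ) : f 0 = ∑ k ∈ Finset.range l, g k + f l := by
    induction l with
    | zero => simp
    | succ l ih => rw [ih, hfg l, Finset.sum_range_succ, add_assoc]
  rw [finsum_eq_sum_of_support_subset g hg, partial_sum m, hm m le_rfl, add_zero]

theorem finite_of_forall_perm {α : Type*} {s : Set (List α)} (h : ∀ v ∈ s, ∀ w ∈ s, v.Perm w) :
    s.Finite := by
  obtain rfl | ⟨w, hw⟩ := s.eq_empty_or_nonempty
  · exact Set.finite_empty
  · exact w.permutations.finite_toSet.subset fun v hv => List.mem_permutations.2 (h v hv w hw)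

theorem cons_cons_injective {α : Type*} (x y : α) :
    Function.Injective fun w : List α => x :: y :: w :=
  List.cons_injective.comp List.cons_injective

theorem downUpAlt_cons_cons_iff {x y : ℕ} {w : List ℕ} :
    DownUpAlt (x :: y :: w) ↔ y < x ∧ (w = [] ∨ y < w.headI) ∧ DownUpAlt w := by
  constructor
  · intro h
    refine ⟨by simpa using h 0 (by simp), ?_, fun k hk => ?_⟩
    · cases w with
      | nil => exact .inl rfl
      | cons z w => simpa using h 1 (by simp)
    · simpa using h (k + 2) (Nat.add_lt_add_right hk 2)
  · rintro ⟨hxy, hw, h⟩ k hk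
    match k with
    | 0 => simpa using hxy
    | 1 =>
      cases w with
      | nil => simp at hk
      | cons z w => simpa using hw
    | k + 2 => simpa using h k (Nat.lt_of_add_lt_add_right (n := 2) hk)

/-- The down-up alternating words over `{1, 2, 3}` that are empty or have first letter `≥ m`,
with `a` ones, `b` twos and `c` threes. The words counted by `N3` are those with `m = 2`; the
case `m = 3` describes what can follow `32`. As in `N3`, the contents are integers, and there are
no such words if one of them is negative. -/
def altWords (m : ℕ) (a b c : ℤ) : Set (List ℕ) :=
  {w | (∀ x ∈ w, 1 ≤ x ∧ x ≤ 3) ∧ DownUpAlt w ∧ (w = [] ∨ m ≤ w.headI) ∧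
    (w.count 1 : ℤ) = a ∧ (w.count 2 : ℤ) = b ∧ (w.count 3 : ℤ) = c}

theorem N3_eq_ncard_altWords (a b c : ℤ) : N3 a b c = (altWords 2 a b c).ncard := rfl

section altWords

variable {m : ℕ} {a b c : ℤ}

theorem perm_of_mem_altWords {v w : List ℕ} (hv : v ∈ altWords m a b c)
    (hw : w ∈ altWords m a b c) : v.Perm w := by
  obtain ⟨hv_letters, -, -, hv1, hv2, hv3⟩ := hv
  obtain ⟨hw_letters, -, -, hw1, hw2, hw3⟩ := hw
  refine List.perm_iff_count.2 fun x => ?_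
  by_cases hx : 1 ≤ x ∧ x ≤ 3
  · obtain ⟨hx1, hx3⟩ := hx
    interval_cases x <;> omega
  · rw [List.count_eq_zero.2 (mt (hv_letters x) hx), List.count_eq_zero.2 (mt (hw_letters x) hx)]

theorem finite_altWords : (altWords m a b c).Finite :=
  finite_of_forall_perm fun _ hv _ hw => perm_of_mem_altWords hv hw

theorem altWords_eq_empty_of_neg (hc : c < 0) : altWords m a b c = ∅ := by
  refine Set.eq_empty_of_forall_notMem ?_
  rintro w ⟨-, -, -, -, -, rfl⟩
  omega

theorem cons_cons_mem_altWords_iff {x y : ℕ} {v : List ℕ} :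
    x :: y :: v ∈ altWords m a b c ↔ (m ≤ x ∧ x ≤ 3 ∧ 1 ≤ y ∧ y < x) ∧
      v ∈ altWords (y + 1) (a - [x, y].count 1) (b - [x, y].count 2) (c - [x, y].count 3) := by
  have count_eq (z : ℕ) : (x :: y :: v).count z = [x, y].count z + v.count z :=
    List.count_append (l₁ := [x, y])
  simp only [altWords, Set.mem_ofPred_eq, downUpAlt_cons_cons_iff, count_eq, List.forall_mem_cons,
    List.headI_cons, reduceCtorEq, false_or, Nat.succ_le_iff, Nat.cast_add, eq_sub_iff_add_eq']
  grind

theorem exists_cons_cons_of_mem_altWords (hm : 2 ≤ m) (ha : a ≠ 0) {w : List ℕ}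
    (hw : w ∈ altWords m a b c) : ∃ x y v, w = x :: y :: v := by
  match w, hw with
  | [], ⟨_, _, _, h1, _⟩ => exact absurd h1.symm (by simpa using ha)
  | [x], ⟨_, _, hx, h1, _⟩ =>
    have hmx : m ≤ x := by simpa using hx
    exact absurd h1.symm (by simpa [List.count_singleton, show x ≠ 1 by omega] using ha)
  | x :: y :: v, _ => exact ⟨x, y, v, rfl⟩

theorem altWords_two_eq_union (ha : a ≠ 0) :
    altWords 2 a b c =
      (fun v => 2 :: 1 :: v) '' altWords 2 (a - 1) (b - 1) c ∪ altWords 3 a b c := by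
  ext w
  constructor
  · intro hw
    obtain ⟨x, y, v, rfl⟩ := exists_cons_cons_of_mem_altWords le_rfl ha hw
    obtain ⟨⟨hx2, hx3, hy1, hyx⟩, hv⟩ := cons_cons_mem_altWords_iff.1 hw
    obtain rfl | rfl : x = 2 ∨ x = 3 := by omega
    · obtain rfl : y = 1 := by omega
      exact .inl ⟨v, by simpa using hv, rfl⟩
    · exact .inr (cons_cons_mem_altWords_iff.2 ⟨⟨le_rfl, hx3, hy1, hyx⟩, hv⟩)
  · rintro (⟨v, hv, rfl⟩ | ⟨hletters, halt, hhead, hcount⟩)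
    · exact cons_cons_mem_altWords_iff.2 ⟨by simp, by simpa using hv⟩
    · exact ⟨hletters, halt, hhead.imp_right (le_trans (by simp)), hcount⟩

theorem altWords_three_eq_union (ha : a ≠ 0) :
    altWords 3 a b c =
      (fun v => 3 :: 1 :: v) '' altWords 2 (a - 1) b (c - 1) ∪
        (fun v => 3 :: 2 :: v) '' altWords 3 a (b - 1) (c - 1) := by
  ext w
  constructor
  · intro hw
    obtain ⟨x, y, v, rfl⟩ := exists_cons_cons_of_mem_altWords (by simp) ha hw
    obtain ⟨⟨hx3, hx3', hy1, hyx⟩, hv⟩ := cons_cons_mem_altWords_iff.1 hw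
    obtain rfl : x = 3 := le_antisymm hx3' hx3
    obtain rfl | rfl : y = 1 ∨ y = 2 := by omega
    · exact .inl ⟨v, by simpa using hv, rfl⟩
    · exact .inr ⟨v, by simpa using hv, rfl⟩
  · rintro (⟨v, hv, rfl⟩ | ⟨v, hv, rfl⟩) <;>
      exact cons_cons_mem_altWords_iff.2 ⟨by simp, by simpa using hv⟩

theorem ncard_altWords_two (ha : a ≠ 0) :
    (altWords 2 a b c).ncard =
      (altWords 2 (a - 1) (b - 1) c).ncard + (altWords 3 a b c).ncard := by
  have hdisj : Disjoint ((fun v => 2 :: 1 :: v) '' altWords 2 (a - 1) (b - 1) c)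
      (altWords 3 a b c) := by
    rw [Set.disjoint_left]
    rintro _ ⟨v, -, rfl⟩ ⟨-, -, h, -⟩
    simp at h
  rw [altWords_two_eq_union ha, Set.ncard_union_eq hdisj (finite_altWords.image _) finite_altWords,
    Set.ncard_image_of_injective _ (cons_cons_injective 2 1)]

theorem ncard_altWords_three (ha : a ≠ 0) :
    (altWords 3 a b c).ncard =
      (altWords 2 (a - 1) b (c - 1)).ncard + (altWords 3 a (b - 1) (c - 1)).ncard := by
  have hdisj : Disjoint ((fun v => 3 :: 1 :: v) '' altWords 2 (a - 1) b (c - 1))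
      ((fun v => 3 :: 2 :: v) '' altWords 3 a (b - 1) (c - 1)) := by
    rw [Set.disjoint_left]
    rintro _ ⟨v, -, rfl⟩ ⟨w, -, h⟩
    simp at h
  rw [altWords_three_eq_union ha, Set.ncard_union_eq hdisj (finite_altWords.image _)
      (finite_altWords.image _),
    Set.ncard_image_of_injective _ (cons_cons_injective 3 1),
    Set.ncard_image_of_injective _ (cons_cons_injective 3 2)]

theorem ncard_altWords_three_eq_finsum (ha : a ≠ 0) :
    (altWords 3 a b c).ncard = ∑ᶠ k : ℕ, (altWords 2 (a - 1) (b - k) (c - 1 - k)).ncard := by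
  have hrec (k : ℕ) : (altWords 3 a (b - k) (c - k)).ncard =
      (altWords 2 (a - 1) (b - k) (c - 1 - k)).ncard +
        (altWords 3 a (b - (k + 1 : ℕ)) (c - (k + 1 : ℕ))).ncard := by
    rw [ncard_altWords_three ha, sub_right_comm c, sub_sub b, sub_right_comm c 1, sub_sub c,
      Nat.cast_succ]
  have hzero : ∀ᶠ k : ℕ in Filter.atTop, (altWords 3 a (b - k) (c - k)).ncard = 0 := by
    filter_upwards [Filter.eventually_gt_atTop c.toNat] with k hk
    rw [altWords_eq_empty_of_neg (by omega), Set.ncard_empty]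
  simpa using eq_finsum_of_eq_add_succ hrec hzero

end altWords

theorem stmt8 (n i j : ℕ) (hn : 1 ≤ n) :
    N3 (n : ℤ) (i : ℤ) (j : ℤ) =
      N3 ((n : ℤ) - 1) ((i : ℤ) - 1) (j : ℤ) +
        ∑ᶠ k : ℕ, N3 ((n : ℤ) - 1) ((i : ℤ) - k) ((j : ℤ) - 1 - k) := by
  have hn0 : (n : ℤ) ≠ 0 := by omega
  simp only [N3_eq_ncard_altWords]
  rw [ncard_altWords_two hn0, ncard_altWords_three_eq_finsum hn0]
end

section
/- For all nonnegative integers n, i, j with |j − i| > n + 1, one has N(n, i, j) = 0; moreover, for every integer d with |d| ≤ n + 1 there exist nonnegative integers i, j with j − i = d and N(n, i, j) ≠ 0. (That is, the matrix M_n with entries N(n,i,j) has exactly 2n+3 nonzero diagonals.) -/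
/-
Consecutive letters of an alternating word differ, so a letter fills at most every other position
and occurs at most once more often than all other letters together. For the letters `2` and `3`
this is the upper bound on `|j - i|`. Conversely, prefixing a word by `21` or `31` adds a one and
moves the difference `j - i` down or up by one, so from the words `2`, `3` and the empty one all
the remaining differences are reached.
-/

theorem two_mul_count_le_length_add_one_of_isChain_ne {α : Type*} [DecidableEq α] (x : α) :
    ∀ {w : List α}, w.IsChain (· ≠ ·) → 2 * w.count x ≤ w.length + 1
  | [], _ => by simp
  | [a], _ => by
    have : [a].count x ≤ 1 := List.count_le_length
    simp only [List.length_singleton]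
    omega
  | a :: b :: w, h => by
    have ih := two_mul_count_le_length_add_one_of_isChain_ne x h.tail.tail
    have hpair : [a, b].count x ≤ 1 :=
      List.nodup_iff_count_le_one.mp (by simpa using h.rel) x
    have hcount : (a :: b :: w).count x = [a, b].count x + w.count x :=
      List.count_append (l₁ := [a, b])
    simp only [List.length_cons, List.tail_cons] at ih ⊢
    omega

theorem finite_setOf_forall_mem_and_length_eq {α : Type*} {s : Set α} (hs : s.Finite) (n : ℕ) :
    {w : List α | (∀ x ∈ w, x ∈ s) ∧ w.length = n}.Finite := by
  have : Finite s := hs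
  refine ((List.finite_length_eq s n).image (List.map (↑))).subset ?_
  rintro w ⟨hw, hlen⟩
  lift w to List s using hw
  exact ⟨w, by simpa using hlen, rfl⟩

namespace DownUpAlt

theorem cons_cons {a b : ℕ} {w : List ℕ} (hab : b < a) (hbw : w = [] ∨ b < w.headI)
    (hw : DownUpAlt w) : DownUpAlt (a :: b :: w) := by
  intro k hk
  match k with
  | 0 => simpa using hab
  | 1 =>
    cases w with
    | nil => simp at hk
    | cons c w => simpa using hbw
  | k + 2 => simpa using hw k (Nat.lt_of_add_lt_add_right (n := 2) hk)

theorem isChain_ne {w : List ℕ} (hw : DownUpAlt w) : w.IsChain (· ≠ ·) := by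
  refine List.isChain_iff_getElem.mpr fun k hk => ?_
  have hlt := hw k hk
  rw [List.getD_eq_getElem _ _ hk, List.getD_eq_getElem _ _ (k.lt_succ_self.trans hk)] at hlt
  split_ifs at hlt
  · exact hlt.ne'
  · exact hlt.ne

end DownUpAlt

/-- The words counted by `N3`: those encoding the reflection paths within three glass plates that
start at the first plate. -/
structure IsReflectionWord (w : List ℕ) : Prop where
  mem_Icc : ∀ x ∈ w, x ∈ Set.Icc 1 3
  downUpAlt : DownUpAlt w
  eq_nil_or_two_le_headI : w = [] ∨ 2 ≤ w.headI

namespace IsReflectionWord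

theorem nil : IsReflectionWord [] :=
  ⟨by simp, by simp [DownUpAlt], .inl rfl⟩

theorem singleton {a : ℕ} (ha : a ∈ Set.Icc 2 3) : IsReflectionWord [a] :=
  ⟨by simpa using ⟨one_le_two.trans ha.1, ha.2⟩, by simp [DownUpAlt], .inr ha.1⟩

theorem cons_cons_one {a : ℕ} {w : List ℕ} (ha : a ∈ Set.Icc 2 3) (hw : IsReflectionWord w) :
    IsReflectionWord (a :: 1 :: w) where
  mem_Icc := by simpa using ⟨⟨one_le_two.trans ha.1, ha.2⟩, hw.mem_Icc⟩
  downUpAlt := hw.downUpAlt.cons_cons ha.1 hw.eq_nil_or_two_le_headI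
  eq_nil_or_two_le_headI := .inr ha.1

end IsReflectionWord

theorem length_eq_count_add_count_add_count {w : List ℕ} (hw : ∀ x ∈ w, x ∈ Set.Icc 1 3) :
    w.length = w.count 1 + w.count 2 + w.count 3 := by
  have hsum : ∑ a ∈ Finset.Icc 1 3, (w : Multiset ℕ).count a = (w : Multiset ℕ).card :=
    Multiset.sum_count_eq_card fun x hx => Finset.mem_Icc.mpr (hw x hx)
  simpa [Finset.sum_Icc_succ_top] using hsum.symm

theorem IsReflectionWord.abs_count_sub_count_le {w : List ℕ} (hw : IsReflectionWord w) :
    |(w.count 3 : ℤ) - w.count 2| ≤ w.count 1 + 1 := by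
  have hlen := length_eq_count_add_count_add_count hw.mem_Icc
  have htwo := two_mul_count_le_length_add_one_of_isChain_ne 2 hw.downUpAlt.isChain_ne
  have hthree := two_mul_count_le_length_add_one_of_isChain_ne 3 hw.downUpAlt.isChain_ne
  rw [abs_le]
  omega

theorem exists_isReflectionWord_count_sub_count_eq (n : ℕ) (d : ℤ) (hd : |d| ≤ n + 1) :
    ∃ w, IsReflectionWord w ∧ w.count 1 = n ∧ (w.count 3 : ℤ) - w.count 2 = d := by
  induction n generalizing d with
  | zero =>
    obtain rfl | rfl | rfl : d = -1 ∨ d = 0 ∨ d = 1 := by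
      rw [abs_le] at hd
      omega
    · exact ⟨[2], .singleton (by simp), by simp, by simp⟩
    · exact ⟨[], .nil, by simp, by simp⟩
    · exact ⟨[3], .singleton (by simp), by simp, by simp⟩
  | succ n ih =>
    rw [abs_le] at hd
    rcases le_or_gt d 0 with hneg | hpos
    · obtain ⟨w, hw, hone, hdiff⟩ := ih (d + 1) (abs_le.mpr (by omega))
      exact ⟨2 :: 1 :: w, hw.cons_cons_one (by simp), by simp [hone], by grind⟩
    · obtain ⟨w, hw, hone, hdiff⟩ := ih (d - 1) (abs_le.mpr (by omega))
      exact ⟨3 :: 1 :: w, hw.cons_cons_one (by simp), by simp [hone], by grind⟩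

theorem N3_ne_zero_iff {a b c : ℤ} :
    N3 a b c ≠ 0 ↔ ∃ w, IsReflectionWord w ∧
      (w.count 1 : ℤ) = a ∧ (w.count 2 : ℤ) = b ∧ (w.count 3 : ℤ) = c := by
  rw [N3, Nat.card_ne_zero]
  constructor
  · rintro ⟨⟨w, hmem, halt, hhead, hcount⟩, -⟩
    exact ⟨w, ⟨hmem, halt, hhead⟩, hcount⟩
  · rintro ⟨w, hw, hcount⟩
    refine ⟨⟨w, hw.mem_Icc, hw.downUpAlt, hw.eq_nil_or_two_le_headI, hcount⟩, ?_⟩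
    refine ((finite_setOf_forall_mem_and_length_eq (Set.finite_Icc 1 3)
      (a + b + c).toNat).subset ?_).to_subtype
    rintro v ⟨hmem, -, -, ha, hb, hc⟩
    have hlen := length_eq_count_add_count_add_count hmem
    exact ⟨hmem, by omega⟩

theorem stmt9 (n : ℕ) :
    (∀ i j : ℕ, (n : ℤ) + 1 < |(j : ℤ) - (i : ℤ)| → N3 (n : ℤ) (i : ℤ) (j : ℤ) = 0) ∧
    (∀ d : ℤ, |d| ≤ (n : ℤ) + 1 →
      ∃ i j : ℕ, (j : ℤ) - (i : ℤ) = d ∧ N3 (n : ℤ) (i : ℤ) (j : ℤ) ≠ 0) := by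
  refine ⟨fun i j hij => ?_, fun d hd => ?_⟩
  · by_contra hN
    obtain ⟨w, hw, hone, htwo, hthree⟩ := N3_ne_zero_iff.mp hN
    have hle := hw.abs_count_sub_count_le
    rw [hone, htwo, hthree] at hle
    exact hle.not_gt hij
  · obtain ⟨w, hw, hone, hdiff⟩ := exists_isReflectionWord_count_sub_count_eq n d hd
    exact ⟨w.count 2, w.count 3, hdiff,
      N3_ne_zero_iff.mpr ⟨w, hw, congrArg Nat.cast hone, rfl, rfl⟩⟩
end

section
/- For all nonnegative integers n, i, j with i + j = n, one has N(n, i, j) = C(n, i), where C denotes the binomial coefficient. -/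
/-!
In a down-up alternating word with at least two letters, the least letter can only sit in a valley,
and every valley has its own peak on the left. If the least letter makes up half of the word, it
therefore fills every valley, and the peaks form an arbitrary word in the remaining letters.
-/

open List

theorem downUpAlt_nil : DownUpAlt [] := by
  intro k hk
  simp at hk

theorem downUpAlt_cons_cons {x y : ℕ} {t : List ℕ} :
    DownUpAlt (x :: y :: t) ↔ y < x ∧ (∀ z ∈ t.head?, y < z) ∧ DownUpAlt t := by
  refine ⟨fun h => ⟨by simpa using h 0, ?_, fun k hk => ?_⟩, ?_⟩
  · cases t with
    | nil => simp
    | cons z s => simpa using h 1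
  · simpa using h (k + 2) (by grind)
  · rintro ⟨hyx, hyt, ht⟩ k hk
    match k with
    | 0 => simpa using hyx
    | 1 =>
      cases t with
      | nil => simp at hk
      | cons z s => simpa using hyt
    | k + 2 => simpa using ht k (by grind)

/-- The word `x₁ a x₂ a ⋯ xₘ a` with peaks `u = x₁ x₂ ⋯ xₘ` and every valley equal to `a`.
With `a = 1` these are the words that `N3` counts when half of the letters are ones. -/
def withValleys (a : ℕ) (u : List ℕ) : List ℕ :=
  u.flatMap fun x => [x, a]

@[simp]
theorem withValleys_cons (a x : ℕ) (u : List ℕ) :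
    withValleys a (x :: u) = x :: a :: withValleys a u :=
  rfl

theorem withValleys_injective (a : ℕ) : (withValleys a).Injective
  | [], [], _ => rfl
  | x :: u, y :: v, h => by
    obtain ⟨hxy, huv⟩ : x = y ∧ withValleys a u = withValleys a v := by simpa using h
    rw [hxy, withValleys_injective a huv]

theorem withValleys_perm (a : ℕ) (u : List ℕ) :
    withValleys a u ~ u ++ replicate u.length a := by
  simpa [withValleys, flatMap_singleton', map_const', ← map_eq_flatMap] using
    (flatMap_append_perm u (fun x => [x]) fun _ => [a]).symm

theorem downUpAlt_withValleys {a : ℕ} {u : List ℕ} (hu : ∀ x ∈ u, a < x) :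
    DownUpAlt (withValleys a u) := by
  induction u with
  | nil => exact downUpAlt_nil
  | cons x u ih =>
    obtain ⟨hx, hu⟩ := forall_mem_cons.1 hu
    refine downUpAlt_cons_cons.2 ⟨hx, ?_, ih hu⟩
    cases u with
    | nil => simp
    | cons z u => simpa using (forall_mem_cons.1 hu).1

namespace DownUpAlt

variable {a : ℕ}

theorem two_mul_count_le_length_add_one : ∀ {w : List ℕ}, DownUpAlt w → (∀ x ∈ w, a ≤ x) →
    2 * w.count a ≤ w.length + 1
  | [], _, _ => by simp
  | [x], _, _ => by simpa using count_le_length (a := a) (l := [x])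
  | x :: y :: t, hw, ha => by
    obtain ⟨hyx, -, ht⟩ := downUpAlt_cons_cons.1 hw
    simp only [forall_mem_cons] at ha
    obtain ⟨-, hay, hat⟩ := ha
    have hxa : x ≠ a := by omega
    have ih := two_mul_count_le_length_add_one ht hat
    have hcount : (y :: t).count a ≤ t.count a + 1 := by grind
    rw [count_cons_of_ne hxa]
    simp only [length_cons]
    omega

theorem exists_withValleys_eq : ∀ {w : List ℕ}, DownUpAlt w → (∀ x ∈ w, a ≤ x) →
    2 * w.count a = w.length → ∃ u, withValleys a u = w
  | [], _, _, _ => ⟨[], rfl⟩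
  | [x], _, _, hc => by simp only [length_singleton] at hc; omega
  | x :: y :: t, hw, ha, hc => by
    obtain ⟨hyx, -, ht⟩ := downUpAlt_cons_cons.1 hw
    simp only [forall_mem_cons] at ha
    obtain ⟨-, hay, hat⟩ := ha
    have hxa : x ≠ a := by omega
    have hle := ht.two_mul_count_le_length_add_one hat
    simp only [length_cons, count_cons_of_ne hxa] at hc
    obtain rfl : a = y := by
      by_contra hne
      rw [count_cons_of_ne (Ne.symm hne)] at hc
      omega
    rw [count_cons_self] at hc
    obtain ⟨u, rfl⟩ := ht.exists_withValleys_eq hat (by omega)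
    exact ⟨x :: u, rfl⟩

theorem eq_nil_or_lt_headI {w : List ℕ} (hw : DownUpAlt w) (ha : ∀ x ∈ w, a ≤ x)
    (hlength : w.length ≠ 1) : w = [] ∨ a < w.headI := by
  match w with
  | [] => exact Or.inl rfl
  | [x] => exact absurd rfl hlength
  | x :: y :: t =>
    exact Or.inr ((ha y (by simp)).trans_lt (downUpAlt_cons_cons.1 hw).1)

end DownUpAlt

theorem setOf_downUpAlt_and_perm {a : ℕ} {s : List ℕ} (hs : ∀ x ∈ s, a < x) :
    {w | DownUpAlt w ∧ w ~ s ++ replicate s.length a} = withValleys a '' {u | u ~ s} := by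
  ext w
  constructor
  · rintro ⟨hw, hperm⟩
    have hle : ∀ x ∈ w, a ≤ x := by
      intro x hx
      rcases mem_append.1 (hperm.mem_iff.1 hx) with hxs | hxa
      · exact (hs x hxs).le
      · exact (eq_of_mem_replicate hxa).ge
    have hlength : w.length = s.length + s.length := by simpa using hperm.length_eq
    have hcount : w.count a = s.length := by
      simpa [count_eq_zero_of_not_mem fun ha => lt_irrefl a (hs a ha)] using hperm.count_eq a
    obtain ⟨u, rfl⟩ := hw.exists_withValleys_eq hle (by omega)
    have hu : u ++ replicate u.length a ~ s ++ replicate s.length a :=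
      (withValleys_perm a u).symm.trans hperm
    have hus : u.length = s.length := by
      have := hu.length_eq
      simp only [length_append, length_replicate] at this
      omega
    rw [hus] at hu
    exact ⟨u, (perm_append_right_iff _).1 hu, rfl⟩
  · rintro ⟨u, hu : u ~ s, rfl⟩
    refine ⟨downUpAlt_withValleys fun x hx => hs x (hu.mem_iff.1 hx), ?_⟩
    rw [← hu.length_eq]
    exact (withValleys_perm a u).trans (hu.append_right _)

section Rearrangements

variable {α : Type*} {x y : α}

theorem setOf_perm_replicate_append_replicate_succ (hxy : x ≠ y) (i j : ℕ) :
    {l | l ~ replicate (i + 1) x ++ replicate (j + 1) y} =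
      cons x '' {l | l ~ replicate i x ++ replicate (j + 1) y} ∪
        cons y '' {l | l ~ replicate (i + 1) x ++ replicate j y} := by
  have hx : replicate (i + 1) x ++ replicate (j + 1) y =
      x :: (replicate i x ++ replicate (j + 1) y) := by
    simp [replicate_succ]
  have hy : replicate (i + 1) x ++ replicate (j + 1) y ~
      y :: (replicate (i + 1) x ++ replicate j y) := by
    simpa only [replicate_succ] using perm_middle
  ext l
  constructor
  · intro hl
    cases l with
    | nil => simp at hl
    | cons z t =>
      have hz : z = x ∨ z = y := by
        simpa using hl.mem_iff.1 mem_cons_self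
      rcases hz with rfl | rfl
      · exact Or.inl ⟨t, (hx ▸ hl).cons_inv, rfl⟩
      · exact Or.inr ⟨t, (hl.trans hy).cons_inv, rfl⟩
  · rintro (⟨t, ht, rfl⟩ | ⟨t, ht, rfl⟩)
    · exact hx ▸ ht.cons x
    · exact (ht.cons y).trans hy.symm

theorem encard_setOf_perm_replicate_append_replicate (hxy : x ≠ y) :
    ∀ i j : ℕ, {l | l ~ replicate i x ++ replicate j y}.encard = (i + j).choose i
  | 0, j => by simp
  | i + 1, 0 => by simp
  | i + 1, j + 1 => by
    have hdisj : Disjoint (cons x '' {l | l ~ replicate i x ++ replicate (j + 1) y})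
        (cons y '' {l | l ~ replicate (i + 1) x ++ replicate j y}) := by
      rw [Set.disjoint_left]
      rintro _ ⟨s, -, rfl⟩ ⟨t, -, h⟩
      exact hxy (head_eq_of_cons_eq h).symm
    rw [setOf_perm_replicate_append_replicate_succ hxy, Set.encard_union_eq hdisj,
      cons_injective.encard_image, cons_injective.encard_image,
      encard_setOf_perm_replicate_append_replicate hxy i (j + 1),
      encard_setOf_perm_replicate_append_replicate hxy (i + 1) j,
      show i + 1 + (j + 1) = i + (j + 1) + 1 by omega, Nat.choose_succ_succ,
      show i + 1 + j = i + (j + 1) by omega]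
    norm_cast

end Rearrangements

theorem perm_replicate_two_three_one_iff {w : List ℕ} {a b c : ℕ} :
    w ~ replicate b 2 ++ replicate c 3 ++ replicate a 1 ↔
      (∀ x ∈ w, 1 ≤ x ∧ x ≤ 3) ∧ w.count 1 = a ∧ w.count 2 = b ∧ w.count 3 = c := by
  constructor
  · intro h
    refine ⟨fun x hx => ?_, ?_⟩
    · have hmem := h.mem_iff.1 hx
      simp only [mem_append, mem_replicate] at hmem
      omega
    · simp [h.count_eq, count_replicate]
  · rintro ⟨hw, rfl, rfl, rfl⟩
    refine perm_iff_count.2 fun x => ?_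
    by_cases hx : x = 1 ∨ x = 2 ∨ x = 3
    · rcases hx with rfl | rfl | rfl <;> simp [count_replicate]
    · have hxw : x ∉ w := fun h => by have := hw x h; omega
      push Not at hx
      simp [count_eq_zero_of_not_mem hxw, count_replicate, hx.1.symm, hx.2.1.symm, hx.2.2.symm]

-- Among the alternating words on these letters only the one-letter word `1` starts with a one.
theorem N3_eq_ncard {a b c : ℕ} (h : a + b + c ≠ 1) :
    N3 a b c = {w | DownUpAlt w ∧
      w ~ replicate b 2 ++ replicate c 3 ++ replicate a 1}.ncard := by
  refine Nat.card_congr (Equiv.subtypeEquivRight fun w => ?_)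
  simp only [Set.mem_ofPred_eq, Nat.cast_inj]
  constructor
  · rintro ⟨hletters, hw, -, hcount⟩
    exact ⟨hw, perm_replicate_two_three_one_iff.2 ⟨hletters, hcount⟩⟩
  · rintro ⟨hw, hperm⟩
    obtain ⟨hletters, hcount⟩ := perm_replicate_two_three_one_iff.1 hperm
    have hlength : w.length = b + c + a := by simpa [add_assoc] using hperm.length_eq
    exact ⟨hletters, hw, hw.eq_nil_or_lt_headI (fun x hx => (hletters x hx).1) (by omega), hcount⟩

theorem stmt12 (n i j : ℕ) (h : i + j = n) :
    N3 (n : ℤ) (i : ℤ) (j : ℤ) = Nat.choose n i := by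
  have hpeaks : ∀ x ∈ replicate i 2 ++ replicate j 3, 1 < x := by
    intro x hx
    simp only [mem_append, mem_replicate] at hx
    omega
  have hlength : (replicate i 2 ++ replicate j 3).length = n := by simpa using h
  have hwords := setOf_downUpAlt_and_perm hpeaks
  rw [hlength] at hwords
  rw [N3_eq_ncard (by omega), hwords, Set.ncard_image_of_injective _ (withValleys_injective 1),
    Set.ncard, encard_setOf_perm_replicate_append_replicate (by decide), h, ENat.toNat_natCast]
end

section
/- For all nonnegative integers n, i, j with i + j = n + 1, one has N(n, i, j) = C(n+1, i), where C denotes the binomial coefficient. -/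
/-!
The letters in odd positions of a reflection word exceed their neighbours, so none of them is a
one; hence a word of length `2 n + 1` has at most `n` ones, and it has exactly `n` only if it is a
word `p` of length `n + 1` in the letters `2` and `3` with a one inserted between any two
consecutive letters. Conversely every such `p` gives a reflection word, and `p` is determined by
the positions of its `i` twos.
-/

section Words

variable {α : Type*}

lemma intersperse_injective (z : α) : Function.Injective (List.intersperse z) := fun p q hpq =>
  List.ext_getElem? fun k => by
    rw [← List.getElem?_intersperse_two_mul (sep := z), hpq, List.getElem?_intersperse_two_mul]

lemma intersperse_perm_replicate_append (z : α) :
    ∀ p : List α, (p.intersperse z).Perm (List.replicate (p.length - 1) z ++ p)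
  | [] => by simp
  | [a] => by simp
  | a :: b :: t =>
    calc (a :: b :: t).intersperse z
      _ = a :: z :: (b :: t).intersperse z := List.intersperse_cons_cons
      _ |>.Perm (a :: z :: (List.replicate t.length z ++ b :: t)) :=
        ((intersperse_perm_replicate_append z (b :: t)).cons z).cons a
      _ |>.Perm (List.replicate (t.length + 1) z ++ a :: b :: t) :=
        (List.perm_middle (l₁ := List.replicate (t.length + 1) z)).symm

lemma finite_setOf_perm (m : List α) : {p : List α | p.Perm m}.Finite :=
  m.permutations.finite_toSet.subset fun _ hp => List.mem_permutations.2 hp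

lemma perm_replicate_append_replicate_append_replicate [DecidableEq α] {l : List α} {a b c : α}
    {m n k : ℕ} (hab : a ≠ b) (hac : a ≠ c) (hbc : b ≠ c) :
    l.Perm (List.replicate m a ++ (List.replicate n b ++ List.replicate k c)) ↔
      l ⊆ [a, b, c] ∧ l.count a = m ∧ l.count b = n ∧ l.count c = k := by
  constructor
  · intro hl
    refine ⟨fun x hx => ?_, ?_, ?_, ?_⟩
    · have := hl.mem_iff.1 hx
      simp only [List.mem_append, List.mem_replicate] at this
      simp only [List.mem_cons, List.not_mem_nil, or_false]
      tauto
    all_goals simp [hl.count_eq, List.count_replicate, *, Ne.symm]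
  · rintro ⟨hl, rfl, rfl, rfl⟩
    refine List.perm_iff_count.2 fun x => ?_
    by_cases hx : x ∈ l
    · have : x = a ∨ x = b ∨ x = c := by simpa using hl hx
      rcases this with rfl | rfl | rfl <;> simp [List.count_replicate, *, Ne.symm]
    · grind [List.count_eq_zero]

lemma setOf_perm_replicate_succ_append_replicate_succ (a b : α) (i j : ℕ) :
    {l : List α | l.Perm (List.replicate (i + 1) a ++ List.replicate (j + 1) b)} =
      List.cons a '' {l | l.Perm (List.replicate i a ++ List.replicate (j + 1) b)} ∪
        List.cons b '' {l | l.Perm (List.replicate (i + 1) a ++ List.replicate j b)} := by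
  ext l
  constructor
  · intro (hl : l.Perm _)
    cases l with
    | nil => simp at hl
    | cons x t =>
      have hx : x = a ∨ x = b := by
        simpa using hl.mem_iff.1 List.mem_cons_self
      rcases hx with rfl | rfl
      · exact Or.inl ⟨t, hl.cons_inv, rfl⟩
      · exact Or.inr ⟨t, (hl.trans List.perm_middle).cons_inv, rfl⟩
  · rintro (⟨t, ht, rfl⟩ | ⟨t, ht, rfl⟩)
    · exact ht.cons a
    · exact (ht.cons b).trans List.perm_middle.symm

theorem ncard_setOf_perm_replicate_append_replicate {a b : α} (hab : a ≠ b) (i j : ℕ) :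
    {l : List α | l.Perm (List.replicate i a ++ List.replicate j b)}.ncard =
      (i + j).choose i := by
  induction i generalizing j with
  | zero => simp
  | succ i ihi =>
    induction j with
    | zero => simp
    | succ j ihj =>
      have hdisj (s t : Set (List α)) : Disjoint (List.cons a '' s) (List.cons b '' t) := by
        rw [Set.disjoint_left]
        grind
      rw [setOf_perm_replicate_succ_append_replicate_succ,
        Set.ncard_union_eq (hdisj _ _) ((finite_setOf_perm _).image _)
          ((finite_setOf_perm _).image _),
        Set.ncard_image_of_injective _ List.cons_injective,
        Set.ncard_image_of_injective _ List.cons_injective, ihi, ihj,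
        Nat.succ_add_eq_add_succ, ← Nat.add_assoc (i + 1), Nat.succ_add_eq_add_succ,
        Nat.choose_succ_succ]

end Words

lemma downUpAlt_cons_cons_s13 {a b : ℕ} {t : List ℕ} :
    DownUpAlt (a :: b :: t) ↔ b < a ∧ (t = [] ∨ b < t.headI) ∧ DownUpAlt t := by
  constructor
  · intro h
    refine ⟨by simpa using h 0 (by simp), ?_, fun k hk => ?_⟩
    · cases t with
      | nil => simp
      | cons c t => right; simpa using h 1 (by simp)
    · simpa using h (k + 2) (by simp only [List.length_cons]; omega)
  · rintro ⟨hab, hb, ht⟩ k hk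
    match k with
    | 0 => simpa using hab
    | 1 =>
      cases t with
      | nil => simp at hk
      | cons c t => simpa using hb
    | k + 2 => simpa using ht k (by simp only [List.length_cons] at hk; omega)

/-- The words encoding reflection paths that start at the lowest plate, numbered `z`: down-up
alternating words in letters `≥ z` that are empty or have first letter `> z`. The number of plates
is left open. -/
structure IsReflectionWord_s13 (z : ℕ) (w : List ℕ) : Prop where
  le_of_mem : ∀ x ∈ w, z ≤ x
  downUpAlt : DownUpAlt w
  eq_nil_or_lt_headI : w = [] ∨ z < w.headI

namespace IsReflectionWord_s13

variable {z : ℕ}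

lemma singleton_iff {a : ℕ} : IsReflectionWord_s13 z [a] ↔ z < a :=
  ⟨fun h => by simpa using h.eq_nil_or_lt_headI,
    fun h => ⟨by simpa using h.le, by simp [DownUpAlt], by simpa using h⟩⟩

lemma cons_cons_iff {a b : ℕ} {t : List ℕ} :
    IsReflectionWord_s13 z (a :: b :: t) ↔
      z ≤ b ∧ b < a ∧ (t = [] ∨ b < t.headI) ∧ IsReflectionWord_s13 z t := by
  constructor
  · rintro ⟨hle, hw, -⟩
    obtain ⟨hba, hbt, ht⟩ := downUpAlt_cons_cons_s13.1 hw
    simp only [List.forall_mem_cons] at hle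
    exact ⟨hle.2.1, hba, hbt, hle.2.2, ht, hbt.imp_right hle.2.1.trans_lt⟩
  · rintro ⟨hzb, hba, hbt, ht⟩
    have hza : z < a := hzb.trans_lt hba
    refine ⟨?_, downUpAlt_cons_cons_s13.2 ⟨hba, hbt, ht.downUpAlt⟩, Or.inr hza⟩
    simpa only [List.forall_mem_cons] using ⟨hza.le, hzb, ht.le_of_mem⟩

lemma two_mul_count_le_length :
    ∀ {w : List ℕ}, IsReflectionWord_s13 z w → 2 * w.count z ≤ w.length
  | [], _ => by simp
  | [a], hw => by simp [(singleton_iff.1 hw).ne']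
  | a :: b :: t, hw => by
    obtain ⟨hzb, hba, -, ht⟩ := cons_cons_iff.1 hw
    have haz : a ≠ z := (hzb.trans_lt hba).ne'
    have hcount : (b :: t).count z ≤ t.count z + 1 := by
      rw [List.count_cons]
      split_ifs <;> omega
    have ih := two_mul_count_le_length ht
    rw [List.count_cons_of_ne haz, List.length_cons, List.length_cons]
    omega

lemma exists_intersperse_eq :
    ∀ {w : List ℕ}, IsReflectionWord_s13 z w → w.length = 2 * w.count z + 1 →
      ∃ p : List ℕ, p.intersperse z = w
  | [], _, hlen => by simp at hlen
  | [a], _, _ => ⟨[a], rfl⟩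
  | a :: b :: t, hw, hlen => by
    obtain ⟨hzb, hba, -, ht⟩ := cons_cons_iff.1 hw
    have haz : a ≠ z := (hzb.trans_lt hba).ne'
    simp only [List.count_cons_of_ne haz, List.length_cons] at hlen
    have hbz : b = z := by
      have hcount := ht.two_mul_count_le_length
      by_contra hne
      rw [List.count_cons_of_ne hne] at hlen
      omega
    subst b
    have htlen : t.length = 2 * t.count z + 1 := by
      rw [List.count_cons_self] at hlen
      omega
    obtain ⟨p, rfl⟩ := exists_intersperse_eq ht htlen
    cases p with
    | nil => simp at htlen
    | cons c p => exact ⟨a :: c :: p, List.intersperse_cons_cons⟩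

lemma intersperse_of_forall_lt :
    ∀ {p : List ℕ}, (∀ x ∈ p, z < x) → IsReflectionWord_s13 z (p.intersperse z)
  | [], _ => ⟨by simp, by simp [DownUpAlt], by simp⟩
  | [a], hp => singleton_iff.2 (hp a (by simp))
  | a :: b :: t, hp => by
    obtain ⟨hza, hbt⟩ := List.forall_mem_cons.1 hp
    have ih := intersperse_of_forall_lt hbt
    rw [List.intersperse_cons_cons]
    exact cons_cons_iff.2 ⟨le_rfl, hza, ih.eq_nil_or_lt_headI, ih⟩

theorem setOf_perm_eq_image_intersperse {n : ℕ} {m : List ℕ} (hm : ∀ x ∈ m, z < x)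
    (hlen : m.length = n + 1) :
    {w | IsReflectionWord_s13 z w ∧ w.Perm (List.replicate n z ++ m)} =
      List.intersperse z '' {p | p.Perm m} := by
  ext w
  constructor
  · rintro ⟨hw, hperm⟩
    have hcount : w.count z = n := by
      have : m.count z = 0 := List.count_eq_zero.2 fun hz => (hm z hz).false
      simp [hperm.count_eq, this]
    have hwlen : w.length = n + (n + 1) := by simp [hperm.length_eq, hlen]
    obtain ⟨p, rfl⟩ := hw.exists_intersperse_eq (by omega)
    have hplen : p.length - 1 = n := by
      rw [List.length_intersperse] at hwlen
      omega
    refine ⟨p, (List.perm_append_left_iff (List.replicate n z)).1 ?_, rfl⟩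
    exact hplen ▸ (intersperse_perm_replicate_append z p).symm.trans (hplen ▸ hperm)
  · rintro ⟨p, hp : p.Perm m, rfl⟩
    have hplen : p.length - 1 = n := by simp [hp.length_eq, hlen]
    refine ⟨intersperse_of_forall_lt fun x hx => hm x (hp.mem_iff.1 hx), ?_⟩
    exact hplen ▸ (intersperse_perm_replicate_append z p).trans (hp.append_left _)

end IsReflectionWord_s13

lemma N3_natCast_eq_ncard (n i j : ℕ) :
    N3 n i j = {w | IsReflectionWord_s13 1 w ∧ w.Perm
      (List.replicate n 1 ++ (List.replicate i 2 ++ List.replicate j 3))}.ncard := by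
  refine congrArg Set.ncard (Set.ext fun w => ?_)
  have hletters : w ⊆ [1, 2, 3] ↔ ∀ x ∈ w, 1 ≤ x ∧ x ≤ 3 := by
    have hmem (x : ℕ) : x ∈ [1, 2, 3] ↔ 1 ≤ x ∧ x ≤ 3 := by
      simp only [List.mem_cons, List.not_mem_nil, or_false]
      omega
    simp only [List.subset_def, hmem]
  simp only [Set.mem_ofPred_eq, Nat.cast_inj, hletters,
    perm_replicate_append_replicate_append_replicate (show 1 ≠ 2 by decide)
      (show 1 ≠ 3 by decide) (show 2 ≠ 3 by decide)]
  exact ⟨fun ⟨hx, hw, hhead, hcount⟩ => ⟨⟨fun x h => (hx x h).1, hw, hhead⟩, hx, hcount⟩,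
    fun ⟨⟨_, hw, hhead⟩, hx, hcount⟩ => ⟨hx, hw, hhead, hcount⟩⟩

theorem stmt13 (n i j : ℕ) (h : i + j = n + 1) :
    N3 (n : ℤ) (i : ℤ) (j : ℤ) = Nat.choose (n + 1) i := by
  have hletters : ∀ x ∈ List.replicate i 2 ++ List.replicate j 3, 1 < x := by
    simp only [List.mem_append, List.mem_replicate]
    omega
  rw [N3_natCast_eq_ncard,
    IsReflectionWord_s13.setOf_perm_eq_image_intersperse hletters (by simpa using h),
    Set.ncard_image_of_injective _ (intersperse_injective 1),
    ncard_setOf_perm_replicate_append_replicate (by decide), h]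
end

section
/- For all nonnegative integers n, i, j, set k = n + 1 if n + i + j is odd and k = n if n + i + j is even (i.e., k = n − 1 + gcd(2, i+j+n+1)), and set ℓ = k + j − i + gcd(2, i+j+n) (so the second summand is 2 if n+i+j is even and 1 if it is odd). Then N(n, i, j) = C(k, (k+j−i)/2) · C(⌊(ℓ−2)/2⌋ + ⌊(i+j−k)/2⌋, ⌊(ℓ−2)/2⌋), where the division (k+j−i)/2 is exact (k + j − i is always even), ⌊·⌋ denotes the integer floor (also for negative arguments), and the binomial coefficient C(α, β) for integers α, β is interpreted as follows: C(α, β) = α!/(β!(α−β)!) if 0 ≤ β ≤ α; C(α, −1) = 1 if α = −1 and C(α, −1) = 0 if α ≠ −1; and C(α, β) = 0 in all other cases. -/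
/-- The extended binomial coefficient of the paper: `Cz a b = C(a,b)` for
`0 ≤ b ≤ a`; `Cz a (-1) = 1` if `a = -1` and `0` otherwise; and `Cz a b = 0`
in all other cases. -/
def Cz (a b : ℤ) : ℤ :=
  if 0 ≤ b ∧ b ≤ a then (Nat.choose a.toNat b.toNat : ℤ)
  else if b = -1 then (if a = -1 then 1 else 0)
  else 0

/-!
An even-length path is a sequence of blocks `21`, `31`, `32` in which no `32` is immediately
followed by `21`. An odd-length path becomes such a sequence, not ending in `32`, when a final
letter `1` is appended. The letter counts determine the numbers `x`, `y`, `z` of the three blocks.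
Removing the last block gives recursions for the number of sequences and for the number of those
not ending in `32`, whose solutions are `C(x + y, y) C(y + z, y)` and
`C(x + y, y) C(y + z - 1, y - 1)`.
-/

lemma Cz_add_natCast (a b : ℕ) : Cz (a + b : ℤ) b = (b + 1).multichoose a := by
  rw [Cz, if_pos (by omega), Nat.multichoose_eq, show b + 1 + a - 1 = a + b by omega,
    Nat.choose_symm_add]
  norm_cast

-- The convention `C(-1, -1) = 1` is what makes this hold for `b = 0`.
lemma Cz_pred_add (a b : ℕ) : Cz ((b : ℤ) - 1 + a) ((b : ℤ) - 1) = b.multichoose a := by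
  rcases b with _ | b
  · rcases a with _ | a
    · simp [Cz]
    · rw [Cz, if_neg (by omega), if_pos (by simp), if_neg (by omega)]
      simp
  · rw [← Cz_add_natCast]
    congr 1 <;> push_cast <;> ring

lemma Cz_of_neg {a b : ℤ} (ha : 0 ≤ a) (hb : b < 0) : Cz a b = 0 := by
  unfold Cz
  split_ifs <;> omega

lemma Cz_of_lt {a b : ℤ} (hb : b ≠ -1) (h : a < b) : Cz a b = 0 := by
  unfold Cz
  split_ifs <;> omega

lemma Cz_mul_Cz_eq_zero {x y z e : ℤ} (hxy : 0 ≤ x + y) (hyz : 0 ≤ y + z) (he : e ≤ 1)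
    (h : x < 0 ∨ y < 0 ∨ z < 0) : Cz (x + y) y * Cz (y - e + z) (y - e) = 0 := by
  rw [mul_eq_zero]
  by_cases hy : y < 0
  · exact .inl (Cz_of_neg hxy hy)
  by_cases hx : x < 0
  · exact .inl (Cz_of_lt (by omega) (by omega))
  · exact .inr (Cz_of_lt (by omega) (by omega))

/-- A ray through three glass plates, recorded by the plates at which it is reflected: a down-up
alternating word over `{1, 2, 3}` whose first letter, if any, is at least `2`. -/
def IsPath (w : List ℕ) : Prop :=
  (∀ x ∈ w, 1 ≤ x ∧ x ≤ 3) ∧ DownUpAlt w ∧ (w = [] ∨ 2 ≤ w.headI)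

/-- `BlockPath x y z m w`: the even-length path `w` is a concatenation of `x` blocks `21`, `y`
blocks `31` and `z` blocks `32`, and its last letter is `m`. The empty path ends at `m = 1`, the
plate from which all paths start, so a block `21` may follow exactly the paths with `m = 1`. -/
inductive BlockPath : ℕ → ℕ → ℕ → ℕ → List ℕ → Prop
  | nil : BlockPath 0 0 0 1 []
  | append_two_one {x y z : ℕ} {w : List ℕ} (h : BlockPath x y z 1 w) :
      BlockPath (x + 1) y z 1 (w ++ [2, 1])
  | append_three_one {x y z m : ℕ} {w : List ℕ} (h : BlockPath x y z m w) :
      BlockPath x (y + 1) z 1 (w ++ [3, 1])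
  | append_three_two {x y z m : ℕ} {w : List ℕ} (h : BlockPath x y z m w) :
      BlockPath x y (z + 1) 2 (w ++ [3, 2])

/-- The even-length paths with `x` blocks `21`, `y` blocks `31` and `z` blocks `32`. -/
def evenPaths (x y z : ℕ) : Set (List ℕ) := {w | ∃ m, BlockPath x y z m w}

/-- The members of `evenPaths x y z` that end at the first plate. Apart from the empty path, these
are the odd-length paths followed by a letter `1`. -/
def closedPaths (x y z : ℕ) : Set (List ℕ) := {w | BlockPath x y z 1 w}

lemma downUpAlt_append_singleton (w : List ℕ) (a : ℕ) :
    DownUpAlt (w ++ [a]) ↔ DownUpAlt w ∧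
      (w ≠ [] → if Even w.length then w.getLastD 1 < a else a < w.getLastD 1) := by
  rcases List.eq_nil_or_concat' w with rfl | ⟨v, b, rfl⟩
  · simp [DownUpAlt]
  have hlast : (v ++ [b] ++ [a]).getD v.length 0 = b := by simp
  have hnew : (v ++ [b] ++ [a]).getD (v.length + 1) 0 = a := by simp
  have hpar : Even (v ++ [b]).length ↔ v.length % 2 ≠ 0 := by
    rw [List.length_append, List.length_singleton, Nat.even_add_one, Nat.even_iff]
  simp only [List.getLastD_concat, hpar, ite_not, forall_prop_of_true (List.concat_ne_nil b v)]
  constructor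
  · intro h
    refine ⟨fun k hk => ?_, ?_⟩
    · have hk' := h k (by rw [List.length_append]; omega)
      rwa [List.getD_append (v ++ [b]) _ _ _ hk,
        List.getD_append (v ++ [b]) _ _ _ (by omega)] at hk'
    · have hk' := h v.length (by simp)
      rwa [hlast, hnew] at hk'
  · rintro ⟨h, hba⟩ k hk
    by_cases hkv : k + 1 < (v ++ [b]).length
    · rw [List.getD_append (v ++ [b]) _ _ _ hkv, List.getD_append (v ++ [b]) _ _ _ (by omega)]
      exact h k hkv
    · obtain rfl : k = v.length := by
        simp only [List.length_append, List.length_singleton] at hk hkv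
        omega
      rwa [hlast, hnew]

lemma isPath_append_singleton (w : List ℕ) (a : ℕ) :
    IsPath (w ++ [a]) ↔ IsPath w ∧ (1 ≤ a ∧ a ≤ 3) ∧
      if Even w.length then w.getLastD 1 < a else a < w.getLastD 1 := by
  rw [IsPath, IsPath, downUpAlt_append_singleton]
  simp only [List.forall_mem_append, List.forall_mem_singleton]
  rcases w with _ | ⟨b, w⟩
  · suffices 1 ≤ a → a ≤ 3 → (2 ≤ a ↔ 1 < a) by simpa [DownUpAlt]
    omega
  · simp only [List.cons_append, List.headI_cons, reduceCtorEq, false_or, ne_eq, not_false_eq_true,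
      forall_const]
    tauto

lemma IsPath.append_pair {w : List ℕ} {a b : ℕ} (hw : IsPath w) (hlen : Even w.length)
    (hlast : w.getLastD 1 < a) (ha : a ≤ 3) (hb : 1 ≤ b) (hba : b < a) : IsPath (w ++ [a, b]) := by
  have hwa : IsPath (w ++ [a]) := by
    rw [isPath_append_singleton, if_pos hlen]
    exact ⟨hw, by omega, hlast⟩
  have hodd : ¬Even (w ++ [a]).length := by
    simpa [Nat.even_add_one] using hlen
  rw [List.append_cons, isPath_append_singleton, if_neg hodd, List.getLastD_concat]
  exact ⟨hwa, by omega, hba⟩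

namespace BlockPath

variable {x y z m : ℕ} {w : List ℕ}

lemma counts (h : BlockPath x y z m w) :
    w.count 1 = x + y ∧ w.count 2 = x + z ∧ w.count 3 = y + z := by
  induction h <;> simp <;> omega

lemma counts_of_append_one (h : BlockPath x y z m (w ++ [1])) :
    w.count 1 + 1 = x + y ∧ w.count 2 = x + z ∧ w.count 3 = y + z := by
  simpa using h.counts

lemma even_length (h : BlockPath x y z m w) : Even w.length := by
  induction h <;> simp_all [Nat.even_add_one]

lemma getLastD_eq (h : BlockPath x y z m w) : w.getLastD 1 = m := by
  cases h <;> simp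

lemma one_le_and_le_two (h : BlockPath x y z m w) : 1 ≤ m ∧ m ≤ 2 := by
  cases h <;> simp

lemma isPath (h : BlockPath x y z m w) : IsPath w := by
  induction h with
  | nil => simp [IsPath, DownUpAlt]
  | append_two_one h ih =>
    exact ih.append_pair h.even_length (h.getLastD_eq.trans_lt one_lt_two) (by simp) le_rfl
      one_lt_two
  | append_three_one h ih | append_three_two h ih =>
    have hlast := h.getLastD_eq
    have hm := h.one_le_and_le_two
    exact ih.append_pair h.even_length (by omega) le_rfl (by simp) (by simp)

lemma exists_eq_append_of_append_one (h : BlockPath x y z m (w ++ [1])) :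
    ∃ v, w = v ++ [2] ∨ w = v ++ [3] ∧ ∃ x y z m, BlockPath x y z m v := by
  generalize hu : w ++ [1] = u at h
  cases h with
  | nil => simp at hu
  | @append_two_one _ _ _ v =>
    rw [List.append_cons v 2 [1], List.append_left_inj] at hu
    exact ⟨v, .inl hu⟩
  | @append_three_one _ _ _ _ v h =>
    rw [List.append_cons v 3 [1], List.append_left_inj] at hu
    exact ⟨v, .inr ⟨hu, _, _, _, _, h⟩⟩
  | append_three_two => simpa using congr_arg List.getLast? hu

end BlockPath

lemma IsPath.exists_blockPath {w : List ℕ} (hw : IsPath w) :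
    (∃ x y z m, BlockPath x y z m w) ∨ ∃ x y z, BlockPath x y z 1 (w ++ [1]) := by
  induction w using List.reverseRecOn with
  | nil => exact .inl ⟨0, 0, 0, 1, .nil⟩
  | append_singleton w a ih =>
    obtain ⟨hw, ha, hlast⟩ := (isPath_append_singleton w a).1 hw
    rcases ih hw with ⟨x, y, z, m, h⟩ | ⟨x, y, z, h⟩
    · rw [if_pos h.even_length, h.getLastD_eq] at hlast
      have hm := h.one_le_and_le_two
      rw [List.append_assoc]
      obtain ⟨rfl, rfl⟩ | rfl : a = 2 ∧ m = 1 ∨ a = 3 := by omega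
      · exact .inr ⟨x + 1, y, z, h.append_two_one⟩
      · exact .inr ⟨x, y + 1, z, h.append_three_one⟩
    · left
      have hodd : ¬Even w.length := by
        simpa [Nat.even_add_one] using h.even_length
      rw [if_neg hodd] at hlast
      obtain rfl | ha_one : a = 1 ∨ 1 < a := by omega
      · exact ⟨x, y, z, 1, h⟩
      · obtain ⟨v, rfl | ⟨rfl, x, y, z, m, hv⟩⟩ := h.exists_eq_append_of_append_one <;>
          rw [List.getLastD_concat] at hlast
        · omega
        · obtain rfl : a = 2 := by omega
          rw [List.append_assoc]
          exact ⟨x, y, z + 1, 2, hv.append_three_two⟩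

lemma evenPaths_zero (x y : ℕ) : evenPaths x y 0 = closedPaths x y 0 := by
  ext w
  constructor
  · rintro ⟨m, h⟩
    cases h with
    | nil => exact .nil
    | append_two_one h => exact h.append_two_one
    | append_three_one h => exact h.append_three_one
  · exact fun h => ⟨1, h⟩

lemma evenPaths_succ (x y z : ℕ) :
    evenPaths x y (z + 1) = closedPaths x y (z + 1) ∪ (· ++ [3, 2]) '' evenPaths x y z := by
  ext w
  constructor
  · rintro ⟨m, h⟩
    cases h with
    | append_two_one h => exact .inl h.append_two_one
    | append_three_one h => exact .inl h.append_three_one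
    | append_three_two h => exact .inr ⟨_, ⟨_, h⟩, rfl⟩
  · rintro (h | ⟨w, ⟨m, h⟩, rfl⟩)
    · exact ⟨1, h⟩
    · exact ⟨2, h.append_three_two⟩

lemma closedPaths_zero_zero_zero : closedPaths 0 0 0 = {[]} := by
  ext w
  constructor
  · rintro ⟨⟩
    rfl
  · rintro rfl
    exact .nil

lemma closedPaths_zero_zero_succ (z : ℕ) : closedPaths 0 0 (z + 1) = ∅ :=
  Set.eq_empty_of_forall_notMem fun w h => by cases h

lemma closedPaths_succ_zero (x z : ℕ) :
    closedPaths (x + 1) 0 z = (· ++ [2, 1]) '' closedPaths x 0 z := by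
  ext w
  constructor
  · rintro (_ | h)
    exact ⟨_, h, rfl⟩
  · rintro ⟨w, h, rfl⟩
    exact h.append_two_one

lemma closedPaths_zero_succ (y z : ℕ) :
    closedPaths 0 (y + 1) z = (· ++ [3, 1]) '' evenPaths 0 y z := by
  ext w
  constructor
  · rintro (_ | _ | h)
    exact ⟨_, ⟨_, h⟩, rfl⟩
  · rintro ⟨w, ⟨m, h⟩, rfl⟩
    exact h.append_three_one

lemma closedPaths_succ_succ (x y z : ℕ) :
    closedPaths (x + 1) (y + 1) z =
      (· ++ [2, 1]) '' closedPaths x (y + 1) z ∪ (· ++ [3, 1]) '' evenPaths (x + 1) y z := by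
  ext w
  constructor
  · rintro (_ | h | h)
    · exact .inl ⟨_, h, rfl⟩
    · exact .inr ⟨_, ⟨_, h⟩, rfl⟩
  · rintro (⟨w, h, rfl⟩ | ⟨w, ⟨m, h⟩, rfl⟩)
    · exact h.append_two_one
    · exact h.append_three_one

lemma encard_image_append {α : Type*} (s : Set (List α)) (v : List α) :
    ((· ++ v) '' s).encard = s.encard :=
  (List.append_left_injective v).encard_image s

lemma encard_evenPaths_succ (x y z : ℕ) :
    (evenPaths x y (z + 1)).encard =
      (closedPaths x y (z + 1)).encard + (evenPaths x y z).encard := by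
  rw [evenPaths_succ, Set.encard_union_eq, encard_image_append]
  rw [Set.disjoint_left]
  rintro _ h ⟨w, -, rfl⟩
  simpa using BlockPath.getLastD_eq h

lemma encard_closedPaths_succ_succ (x y z : ℕ) :
    (closedPaths (x + 1) (y + 1) z).encard =
      (closedPaths x (y + 1) z).encard + (evenPaths (x + 1) y z).encard := by
  rw [closedPaths_succ_succ, Set.encard_union_eq, encard_image_append, encard_image_append]
  rw [Set.disjoint_left]
  rintro _ ⟨v, -, rfl⟩ ⟨w, -, h⟩
  simpa using List.append_inj_right' h rfl

lemma encard_evenPaths_of_closedPaths {x y : ℕ}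
    (h : ∀ z, (closedPaths x y z).encard = ((y + 1).multichoose x * y.multichoose z : ℕ)) (z : ℕ) :
    (evenPaths x y z).encard = ((y + 1).multichoose x * (y + 1).multichoose z : ℕ) := by
  induction z with
  | zero => rw [evenPaths_zero, h, Nat.multichoose_zero_right, Nat.multichoose_zero_right]
  | succ z ih =>
    rw [encard_evenPaths_succ, h, ih, Nat.multichoose_succ_succ, mul_add]
    norm_cast

/-- A path is determined by the relative order of its blocks `21` and `31` and that of its blocks
`31` and `32`, since between two blocks `31` the blocks `21` precede the blocks `32`. If it is
closed, no block `32` comes after the last `31`. -/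
theorem encard_closedPaths (x y z : ℕ) :
    (closedPaths x y z).encard = ((y + 1).multichoose x * y.multichoose z : ℕ) := by
  induction y generalizing x z with
  | zero =>
    induction x with
    | zero =>
      cases z with
      | zero => simp [closedPaths_zero_zero_zero]
      | succ z => simp [closedPaths_zero_zero_succ]
    | succ x ih => simpa [closedPaths_succ_zero, encard_image_append] using ih
  | succ y ihy =>
    have even (x : ℕ) := encard_evenPaths_of_closedPaths (ihy x) z
    induction x with
    | zero => simp [closedPaths_zero_succ, encard_image_append, even]
    | succ x ihx =>
      rw [encard_closedPaths_succ_succ, ihx, even, Nat.multichoose_succ_succ (y + 1), add_mul,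
        add_comm]
      norm_cast

theorem encard_evenPaths (x y z : ℕ) :
    (evenPaths x y z).encard = ((y + 1).multichoose x * (y + 1).multichoose z : ℕ) :=
  encard_evenPaths_of_closedPaths (encard_closedPaths x y) z

/-- The paths with `n` reflections at the first plate, `i` at the second and `j` at the third. -/
def pathsWithCounts (n i j : ℕ) : Set (List ℕ) :=
  {w | IsPath w ∧ w.count 1 = n ∧ w.count 2 = i ∧ w.count 3 = j}

lemma N3_eq_ncard_s16 (n i j : ℕ) : N3 n i j = (pathsWithCounts n i j).ncard := by
  rw [N3, ← Nat.card_coe_set_eq]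
  simp only [Nat.cast_inj, pathsWithCounts, IsPath, and_assoc]
  rfl

lemma pathsWithCounts_eq_evenPaths (x y z : ℕ) :
    pathsWithCounts (x + y) (x + z) (y + z) = evenPaths x y z := by
  ext w
  constructor
  · rintro ⟨hw, hcounts⟩
    rcases hw.exists_blockPath with ⟨x', y', z', m, h⟩ | ⟨x', y', z', h⟩
    · have hcounts' := h.counts
      obtain ⟨rfl, rfl, rfl⟩ : x' = x ∧ y' = y ∧ z' = z := by omega
      exact ⟨m, h⟩
    · have hcounts' := h.counts_of_append_one
      omega
  · rintro ⟨m, h⟩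
    exact ⟨h.isPath, h.counts⟩

lemma image_append_one_pathsWithCounts {n x y : ℕ} (hn : n + 1 = x + y) (z : ℕ) :
    (· ++ [1]) '' pathsWithCounts n (x + z) (y + z) = closedPaths x y z := by
  ext u
  constructor
  · rintro ⟨w, ⟨hw, hcounts⟩, rfl⟩
    rcases hw.exists_blockPath with ⟨x', y', z', m, h⟩ | ⟨x', y', z', h⟩
    · have hcounts' := h.counts
      omega
    · have hcounts' := h.counts_of_append_one
      obtain ⟨rfl, rfl, rfl⟩ : x' = x ∧ y' = y ∧ z' = z := by omega
      exact h
  · intro (h : BlockPath x y z 1 u)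
    rcases List.eq_nil_or_concat' u with rfl | ⟨w, a, rfl⟩
    · have hzero : 0 = x + y := h.counts.1
      omega
    · obtain rfl : a = 1 := by simpa using h.getLastD_eq
      have hcounts := h.counts_of_append_one
      exact ⟨w, ⟨((isPath_append_singleton w 1).1 h.isPath).1, by omega, hcounts.2⟩, rfl⟩

theorem N3_even_eq_multichoose (x y z : ℕ) :
    N3 ↑(x + y) ↑(x + z) ↑(y + z) = (y + 1).multichoose x * (y + 1).multichoose z := by
  rw [N3_eq_ncard_s16, pathsWithCounts_eq_evenPaths, Set.ncard, encard_evenPaths, ENat.toNat_natCast]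

theorem N3_odd_eq_multichoose {n x y : ℕ} (hn : n + 1 = x + y) (z : ℕ) :
    N3 n ↑(x + z) ↑(y + z) = (y + 1).multichoose x * y.multichoose z := by
  rw [N3_eq_ncard_s16, Set.ncard, ← encard_image_append _ [1], image_append_one_pathsWithCounts hn,
    encard_closedPaths, ENat.toNat_natCast]

lemma exists_blocks_of_N3_ne_zero {n i j : ℕ} (h : N3 n i j ≠ 0) :
    ∃ x y z, (n = x + y ∨ n + 1 = x + y) ∧ i = x + z ∧ j = y + z := by
  rw [N3_eq_ncard_s16] at h
  obtain ⟨w, hw, rfl, rfl, rfl⟩ := Set.nonempty_of_ncard_ne_zero h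
  rcases hw.exists_blockPath with ⟨x, y, z, m, h⟩ | ⟨x, y, z, h⟩
  · exact ⟨x, y, z, .inl h.counts.1, h.counts.2⟩
  · exact ⟨x, y, z, .inr h.counts_of_append_one.1, h.counts_of_append_one.2⟩

section BlockNumbers

variable {n i j : ℕ} {x y z : ℤ}

lemma N3_eq_zero_of_neg (hn : (n : ℤ) = x + y ∨ (n : ℤ) + 1 = x + y) (hi : (i : ℤ) = x + z)
    (hj : (j : ℤ) = y + z) (h : x < 0 ∨ y < 0 ∨ z < 0) : N3 n i j = 0 := by
  by_contra hN
  obtain ⟨x', y', z', hn', hi', hj'⟩ := exists_blocks_of_N3_ne_zero hN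
  omega

theorem N3_even_eq_Cz (hn : (n : ℤ) = x + y) (hi : (i : ℤ) = x + z) (hj : (j : ℤ) = y + z) :
    (N3 n i j : ℤ) = Cz n y * Cz (y + z) y := by
  by_cases h : x < 0 ∨ y < 0 ∨ z < 0
  · rw [N3_eq_zero_of_neg (.inl hn) hi hj h, hn]
    simpa using (Cz_mul_Cz_eq_zero (e := 0) (by omega) (by omega) (by omega) h).symm
  · lift x to ℕ using by omega
    lift y to ℕ using by omega
    lift z to ℕ using by omega
    rw [hn, hi, hj, add_comm (y : ℤ) z, Cz_add_natCast, Cz_add_natCast, add_comm (z : ℤ) y]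
    exact_mod_cast N3_even_eq_multichoose x y z

theorem N3_odd_eq_Cz (hn : (n : ℤ) + 1 = x + y) (hi : (i : ℤ) = x + z) (hj : (j : ℤ) = y + z) :
    (N3 n i j : ℤ) = Cz (n + 1) y * Cz (y - 1 + z) (y - 1) := by
  by_cases h : x < 0 ∨ y < 0 ∨ z < 0
  · rw [N3_eq_zero_of_neg (.inr hn) hi hj h, hn,
      Cz_mul_Cz_eq_zero (by omega) (by omega) le_rfl h, Nat.cast_zero]
  · lift x to ℕ using by omega
    lift y to ℕ using by omega
    lift z to ℕ using by omega
    rw [hn, hi, hj, Cz_add_natCast, Cz_pred_add]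
    exact_mod_cast N3_odd_eq_multichoose (by exact_mod_cast hn) z

end BlockNumbers

theorem stmt16 (n i j : ℕ) :
    let k : ℤ := if Odd (n + i + j) then (n : ℤ) + 1 else (n : ℤ)
    let l : ℤ := k + (j : ℤ) - (i : ℤ) + (if Even (n + i + j) then 2 else 1)
    (N3 (n : ℤ) (i : ℤ) (j : ℤ) : ℤ) =
      Cz k (Int.fdiv (k + (j : ℤ) - (i : ℤ)) 2) *
        Cz (Int.fdiv (l - 2) 2 + Int.fdiv ((i : ℤ) + (j : ℤ) - k) 2)
          (Int.fdiv (l - 2) 2) := by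
  intro k l
  simp only [Int.fdiv_eq_ediv_of_nonneg _ (zero_le_two : (0 : ℤ) ≤ 2)]
  have hpar : (k + j - i) % 2 = 0 := by grind
  have hi : (i : ℤ) = (k + i - j) / 2 + (i + j - k) / 2 := by omega
  have hj : (j : ℤ) = (k + j - i) / 2 + (i + j - k) / 2 := by omega
  have hk : k = (k + i - j) / 2 + (k + j - i) / 2 := by omega
  rcases Nat.even_or_odd (n + i + j) with h | h
  · have hkn : k = n := if_neg (Nat.not_odd_iff_even.2 h)
    have hl : (l - 2) / 2 = (k + j - i) / 2 := by simp only [l, if_pos h]; omega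
    rw [hl, N3_even_eq_Cz (hkn ▸ hk) hi hj, hkn]
  · have hkn : k = n + 1 := if_pos h
    have hl : (l - 2) / 2 = (k + j - i) / 2 - 1 := by
      simp only [l, if_neg (Nat.not_even_iff_odd.2 h)]; omega
    rw [hl, N3_odd_eq_Cz (hkn ▸ hk) hi hj, hkn]
end
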